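/- For all integers d ≥ 1 and n ≥ 1, the second singular homology group H_2(SP^d(ℂP^n); ℤ) is isomorphic to ℤ. -/

import Mathlib

open scoped Topology

/-- Complex projective `n`-space `ℂP^n`: the quotient of `ℂ^{n+1} ∖ {0}` by the scalar
action of `ℂ*`, with the quotient topology. -/
def CP (n : ℕ) : Type := Projectivization ℂ (Fin (n + 1) → ℂ)

instance (n : ℕ) : TopologicalSpace (CP n) :=
  inferInstanceAs (TopologicalSpace (Quotient (projectivizationSetoid ℂ (Fin (n + 1) → ℂ))))

/-- The setoid on `X^d` identifying tuples up to the permutation action of the symmetric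
group on `d` letters. -/
def SPSetoid (X : Type) (d : ℕ) : Setoid (Fin d → X) where
  r f g := ∃ σ : Equiv.Perm (Fin d), f ∘ σ = g
  iseqv := by
    refine ⟨fun f => ⟨Equiv.refl _, rfl⟩, ?_, ?_⟩
    · rintro f g ⟨σ, rfl⟩
      exact ⟨σ.symm, by funext i; simp⟩
    · rintro f g h ⟨σ, rfl⟩ ⟨τ, rfl⟩
      exact ⟨τ.trans σ, rfl⟩

/-- The `d`-th symmetric product `SP^d(X)`: the quotient of `X^d` by the permutation action
of the symmetric group on `d` letters, with the quotient topology. -/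
def SP (X : Type) [TopologicalSpace X] (d : ℕ) : Type := Quotient (SPSetoid X d)

instance (X : Type) [TopologicalSpace X] (d : ℕ) : TopologicalSpace (SP X d) :=
  inferInstanceAs (TopologicalSpace (Quotient (SPSetoid X d)))

open CategoryTheory in
/-- Singular homology of a topological space with coefficients in a commutative ring `R`. -/
noncomputable def SingularHomology (R : Type) [CommRing R]
    (X : Type) [TopologicalSpace X] (n : ℕ) : ModuleCat R :=
  ((AlgebraicTopology.alternatingFaceMapComplex (ModuleCat R)).obj
    (((SimplicialObject.whiskering _ _).obj (ModuleCat.free R)).obj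
      (TopCat.toSSet.obj (TopCat.of X)))).homology n

/-!
View a point of `ℂPⁿ` as a nonzero polynomial of degree at most `n`, up to scalars. For
`m = 0, 1, …, nd`, the cycles none of whose points vanishes at `m` form a contractible open set
`U_m`, and these sets cover `SP^d(ℂPⁿ)`: the product of the `d` polynomials of a cycle has degree at
most `nd`, so it cannot vanish at `nd + 1` integers.

The elementary symmetric functions of the ratios of the values at `1` and `0` of the points of a
cycle make `U_0 ∩ U_1` homotopy equivalent to the set of `c ∈ ℂ^d` with one prescribed coordinate
nonzero, hence to `ℂ ∖ {0}`. By Mayer–Vietoris, `H_2(U_0 ∪ U_1) ≅ H_1(ℂ ∖ {0})` is the coefficient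
ring. Adjoining the remaining `U_m` one at a time does not change `H_2`. For `m ≥ 2` the first
homology of `(⋃_{j<m} U_j) ∩ U_m` vanishes, which gives surjectivity. Injectivity follows by
comparison along the multiplication of polynomials `SP^d(ℂPⁿ) → ℂP^{nd}`, which respects the covers
and is an isomorphism on `H_1(U_0 ∩ U_1)`: in `ℂP^{nd}`, the sets `(⋃_{j<m} U_j) ∩ U_m` are
punctured complex vector spaces up to homotopy, so their second homology vanishes.
-/

open scoped ContinuousMap
open Finsupp (single)

/-! ### Barycentric subdivision -/

lemma linearMap_ext_single {R α M : Type*} [CommSemiring R] [AddCommMonoid M] [Module R M]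
    {f g : (α →₀ R) →ₗ[R] M} (h : ∀ a, f (single a 1) = g (single a 1)) : f = g :=
  Finsupp.basisSingleOne.ext fun a ↦ by simpa using h a

lemma linearMap_mem_of_mem_supported {R α M : Type*} [CommSemiring R] [AddCommMonoid M] [Module R M]
    (f : (α →₀ R) →ₗ[R] M) {s : Set α} {S : Submodule R M} (h : ∀ a ∈ s, f (single a 1) ∈ S)
    {c : α →₀ R} (hc : c ∈ Finsupp.supported R R s) : f c ∈ S := by
  rw [Finsupp.supported_eq_span_single] at hc
  have hle : Submodule.span R ((fun a ↦ single a (1 : R)) '' s) ≤ S.comap f :=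
    Submodule.span_le.2 <| Set.forall_mem_image.2 h
  exact hle hc

/-- Formal `R`-linear combinations of `n`-tuples of points of `P`, a tuple standing for the affine
simplex it spans. Chains are indexed by the number of vertices, so that `n = 0` is the degree `-1`
of the augmented complex. -/
abbrev AffineChain (R : Type*) [CommRing R] (n : ℕ) (P : Type*) :=
  (Fin n → P) →₀ R

namespace AffineChain

variable {R : Type*} [CommRing R] {P Q : Type*} {n : ℕ}

/-- The alternating sum of the faces of an affine simplex. -/
noncomputable def boundary : AffineChain R (n + 1) P →ₗ[R] AffineChain R n P :=
  ∑ i : Fin (n + 1), (-1 : R) ^ (i : ℕ) • Finsupp.lmapDomain R R (· ∘ i.succAbove)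

/-- The cone with apex `b`, which is the new vertex number `0`. -/
noncomputable def cone (b : P) : AffineChain R n P →ₗ[R] AffineChain R (n + 1) P :=
  Finsupp.lmapDomain R R (Fin.cons (α := fun _ ↦ P) b)

/-- The chain map induced by a map of vertices. -/
noncomputable def map (g : P → Q) : AffineChain R n P →ₗ[R] AffineChain R n Q :=
  Finsupp.lmapDomain R R (g ∘ ·)

lemma boundary_single (l : Fin (n + 1) → P) :
    boundary (single l (1 : R)) =
      ∑ i : Fin (n + 1), (-1 : R) ^ (i : ℕ) • single (l ∘ i.succAbove) 1 := by
  simp [boundary]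

lemma cone_single (b : P) (l : Fin n → P) (r : R) :
    cone b (single l r) = single (Fin.cons (α := fun _ ↦ P) b l) r := by
  simp [cone]

@[simp]
lemma map_single (g : P → Q) (l : Fin n → P) (r : R) : map g (single l r) = single (g ∘ l) r := by
  simp [map]

lemma single_eq_cone (l : Fin (n + 1) → P) :
    (single l 1 : AffineChain R (n + 1) P) = cone (l 0) (single (Fin.tail l) 1) := by
  rw [cone_single, Fin.cons_self_tail]

lemma boundary_cone_zero (b : P) (c : AffineChain R 0 P) : boundary (cone b c) = c := by
  refine LinearMap.congr_fun (f := boundary ∘ₗ cone b) (g := .id)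
    (linearMap_ext_single fun l ↦ ?_) c
  simp [cone_single, boundary_single, Subsingleton.elim _ l]

lemma boundary_cone (b : P) (c : AffineChain R (n + 1) P) :
    boundary (cone b c) = c - cone b (boundary c) := by
  refine LinearMap.congr_fun (f := boundary ∘ₗ cone b) (g := .id - cone b ∘ₗ boundary)
    (linearMap_ext_single fun l ↦ ?_) c
  have hface (i : Fin (n + 1)) : Fin.cons (α := fun _ ↦ P) b l ∘ i.succ.succAbove =
      Fin.cons (α := fun _ ↦ P) b (l ∘ i.succAbove) := by
    funext j
    cases j using Fin.cases <;> simp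
  have htail : Fin.cons (α := fun _ ↦ P) b l ∘ Fin.succ = l := funext fun j ↦ by simp
  simp [cone_single, boundary_single, Fin.sum_univ_succ, hface, htail, pow_succ, sub_eq_add_neg]

lemma boundary_boundary (c : AffineChain R (n + 2) P) : boundary (boundary c) = 0 := by
  refine LinearMap.congr_fun (f := boundary ∘ₗ boundary) (g := 0) ?_ c
  clear c
  induction n with
  | zero =>
    refine linearMap_ext_single fun l ↦ ?_
    rw [LinearMap.comp_apply, single_eq_cone, boundary_cone, map_sub, boundary_cone_zero, sub_self,
      LinearMap.zero_apply]
  | succ n ih =>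
    refine linearMap_ext_single fun l ↦ ?_
    have h := LinearMap.congr_fun ih (single (Fin.tail l) 1)
    rw [LinearMap.comp_apply, LinearMap.zero_apply] at h
    rw [LinearMap.comp_apply, single_eq_cone, boundary_cone, map_sub, boundary_cone, h, map_zero,
      sub_zero, sub_self, LinearMap.zero_apply]

lemma map_boundary (g : P → Q) (c : AffineChain R (n + 1) P) :
    map g (boundary c) = boundary (map g c) := by
  refine LinearMap.congr_fun (f := map g ∘ₗ boundary) (g := boundary ∘ₗ map g)
    (linearMap_ext_single fun l ↦ ?_) c
  simp [boundary_single, Function.comp_assoc]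

lemma map_cone (g : P → Q) (b : P) (c : AffineChain R n P) :
    map g (cone b c) = cone (g b) (map g c) := by
  refine LinearMap.congr_fun (f := map g ∘ₗ cone b) (g := cone (g b) ∘ₗ map g)
    (linearMap_ext_single fun l ↦ ?_) c
  have hcons : g ∘ Fin.cons (α := fun _ ↦ P) b l = Fin.cons (α := fun _ ↦ Q) (g b) (g ∘ l) := by
    funext j
    cases j using Fin.cases <;> simp
  simp [cone_single, hcons]

/-- Barycentric subdivision, for an arbitrary choice `b` of a barycentre of each simplex. -/
noncomputable def subdivision (b : ∀ n, (Fin (n + 1) → P) → P) :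
    ∀ n, AffineChain R n P →ₗ[R] AffineChain R n P
  | 0 => .id
  | n + 1 => Finsupp.linearCombination R fun l ↦
      cone (b n l) (subdivision b n (boundary (single l 1)))

/-- The chain homotopy from the identity to the barycentric subdivision. -/
noncomputable def subdivisionHomotopy (b : ∀ n, (Fin (n + 1) → P) → P) :
    ∀ n, AffineChain R n P →ₗ[R] AffineChain R (n + 1) P
  | 0 => 0
  | n + 1 => Finsupp.linearCombination R fun l ↦
      cone (b n l) (single l 1 - subdivisionHomotopy b n (boundary (single l 1)))

variable (b : ∀ n, (Fin (n + 1) → P) → P)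

lemma subdivision_single (l : Fin (n + 1) → P) :
    subdivision b (n + 1) (single l (1 : R)) =
      cone (b n l) (subdivision b n (boundary (single l 1))) := by
  simp [subdivision]

lemma subdivisionHomotopy_single (l : Fin (n + 1) → P) :
    subdivisionHomotopy b (n + 1) (single l (1 : R)) =
      cone (b n l) (single l 1 - subdivisionHomotopy b n (boundary (single l 1))) := by
  simp [subdivisionHomotopy]

lemma boundary_subdivision (c : AffineChain R (n + 1) P) :
    boundary (subdivision b (n + 1) c) = subdivision b n (boundary c) := by
  refine LinearMap.congr_fun (f := boundary ∘ₗ subdivision b (n + 1))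
    (g := subdivision b n ∘ₗ boundary) ?_ c
  clear c
  induction n with
  | zero =>
    refine linearMap_ext_single fun l ↦ ?_
    rw [LinearMap.comp_apply, subdivision_single, boundary_cone_zero, LinearMap.comp_apply]
  | succ n ih =>
    refine linearMap_ext_single fun l ↦ ?_
    have h := LinearMap.congr_fun ih (boundary (single l 1))
    simp only [LinearMap.comp_apply, boundary_boundary, map_zero] at h
    simp [subdivision_single, boundary_cone, h]

lemma boundary_subdivisionHomotopy (c : AffineChain R (n + 1) P) :
    boundary (subdivisionHomotopy b (n + 1) c) + subdivisionHomotopy b n (boundary c) =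
      c - subdivision b (n + 1) c := by
  refine LinearMap.congr_fun
    (f := boundary ∘ₗ subdivisionHomotopy b (n + 1) + subdivisionHomotopy b n ∘ₗ boundary)
    (g := .id - subdivision b (n + 1)) ?_ c
  clear c
  induction n with
  | zero =>
    refine linearMap_ext_single fun l ↦ ?_
    simp [subdivisionHomotopy, subdivision, boundary_cone]
  | succ n ih =>
    refine linearMap_ext_single fun l ↦ ?_
    have h := LinearMap.congr_fun ih (boundary (single l 1))
    simp only [LinearMap.add_apply, LinearMap.comp_apply, LinearMap.sub_apply, LinearMap.id_apply,
      boundary_boundary, map_zero, add_zero] at h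
    simp [subdivisionHomotopy_single, subdivision_single, boundary_cone, h]
    abel

variable {b} {b' : ∀ n, (Fin (n + 1) → Q) → Q} {g : P → Q}

lemma map_subdivision (hb : ∀ n l, g (b n l) = b' n (g ∘ l)) (c : AffineChain R n P) :
    map g (subdivision b n c) = subdivision b' n (map g c) := by
  induction n with
  | zero => rfl
  | succ n ih =>
    refine LinearMap.congr_fun (f := map g ∘ₗ subdivision b (n + 1))
      (g := subdivision b' (n + 1) ∘ₗ map g) (linearMap_ext_single fun l ↦ ?_) c
    simp [subdivision_single, map_cone, hb, ih, map_boundary]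

lemma map_subdivisionHomotopy (hb : ∀ n l, g (b n l) = b' n (g ∘ l)) (c : AffineChain R n P) :
    map g (subdivisionHomotopy b n c) = subdivisionHomotopy b' n (map g c) := by
  induction n with
  | zero => simp [subdivisionHomotopy]
  | succ n ih =>
    refine LinearMap.congr_fun (f := map g ∘ₗ subdivisionHomotopy b (n + 1))
      (g := subdivisionHomotopy b' (n + 1) ∘ₗ map g) (linearMap_ext_single fun l ↦ ?_) c
    simp [subdivisionHomotopy_single, map_cone, hb, ih, map_boundary]

end AffineChain

/-- The affine map of standard simplices sending the `i`-th vertex to `l i`. -/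
noncomputable def affineSimplex {n k : ℕ} (l : Fin n → stdSimplex ℝ (Fin k)) :
    C(stdSimplex ℝ (Fin n), stdSimplex ℝ (Fin k)) where
  toFun t := ⟨fun j ↦ ∑ i, t i * l i j,
    fun j ↦ Finset.sum_nonneg fun i _ ↦ mul_nonneg (t.2.1 i) ((l i).2.1 j), by
      rw [Finset.sum_comm]
      simp only [← Finset.mul_sum, stdSimplex.sum_eq_one, mul_one]⟩
  continuous_toFun := by
    refine Continuous.subtype_mk (continuous_pi fun j ↦ continuous_finsetSum _ fun i _ ↦ ?_) _
    exact ((continuous_apply i).comp continuous_subtype_val).mul continuous_const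

namespace affineSimplex

variable {m n k : ℕ}

lemma apply_apply (l : Fin n → stdSimplex ℝ (Fin k)) (t : stdSimplex ℝ (Fin n)) (j : Fin k) :
    affineSimplex l t j = ∑ i, t i * l i j := rfl

lemma apply_map (l : Fin n → stdSimplex ℝ (Fin k)) (f : Fin m → Fin n) (t : stdSimplex ℝ (Fin m)) :
    affineSimplex l (stdSimplex.map f t) = affineSimplex (l ∘ f) t := by
  ext j
  have hmap (i : Fin n) : stdSimplex.map f t i = ∑ a with f a = i, t a := by
    rw [stdSimplex.map_coe, FunOnFinite.linearMap_apply_apply]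
  change affineSimplex l _ j = affineSimplex _ t j
  simp only [apply_apply, hmap, Finset.sum_mul, Function.comp]
  rw [← Finset.sum_fiberwise Finset.univ f]
  refine Finset.sum_congr rfl fun i _ ↦ Finset.sum_congr rfl fun a ha ↦ ?_
  rw [(Finset.mem_filter.1 ha).2]

lemma apply_vertex (l : Fin n → stdSimplex ℝ (Fin k)) (i : Fin n) :
    affineSimplex l (stdSimplex.vertex i) = l i := by
  ext j
  change ∑ a, (Pi.single i 1 : Fin n → ℝ) a * l a j = l i j
  simp [Pi.single_apply]

lemma comp_affineSimplex (l : Fin n → stdSimplex ℝ (Fin k)) (μ : Fin m → stdSimplex ℝ (Fin n)) :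
    (affineSimplex l).comp (affineSimplex μ) = affineSimplex (affineSimplex l ∘ μ) := by
  ext t j
  change ∑ i, (∑ a, t a * μ a i) * l i j = ∑ a, t a * ∑ i, μ a i * l i j
  simp only [Finset.sum_mul, Finset.mul_sum, mul_assoc]
  exact Finset.sum_comm

lemma vertex : affineSimplex (stdSimplex.vertex : Fin n → stdSimplex ℝ (Fin n)) = .id _ := by
  ext t j
  change ∑ i, t i * (Pi.single i 1 : Fin n → ℝ) j = t j
  simp [Pi.single_apply]

/-- The barycentre of an affine simplex. -/
noncomputable def barycenter (n : ℕ) (l : Fin (n + 1) → stdSimplex ℝ (Fin k)) :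
    stdSimplex ℝ (Fin k) :=
  affineSimplex l stdSimplex.barycenter

lemma apply_barycenter (l : Fin k → stdSimplex ℝ (Fin m)) (n : ℕ)
    (μ : Fin (n + 1) → stdSimplex ℝ (Fin k)) :
    affineSimplex l (barycenter n μ) = barycenter n (affineSimplex l ∘ μ) :=
  DFunLike.congr_fun (comp_affineSimplex l μ) _

end affineSimplex

/-- The singular chains spanned by the continuous maps from the standard simplex with `n` vertices.
As for `AffineChain`, the case `n = 0` is the degree `-1` of the augmented complex: the empty
simplex is its only generator. -/
abbrev SingularChain (R : Type*) [CommRing R] (n : ℕ) (X : Type*) [TopologicalSpace X] :=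
  C(stdSimplex ℝ (Fin n), X) →₀ R

namespace SingularChain

variable {R : Type*} [CommRing R] {X Y Z : Type*} [TopologicalSpace X] [TopologicalSpace Y]
  [TopologicalSpace Z] {n k : ℕ}

/-- The inclusion of the `i`-th face of a standard simplex. -/
noncomputable def face (i : Fin (n + 1)) : C(stdSimplex ℝ (Fin n), stdSimplex ℝ (Fin (n + 1))) :=
  ⟨stdSimplex.map i.succAbove, stdSimplex.continuous_map _⟩

/-- The boundary of a singular chain; for `n = 0` it is the augmentation. -/
noncomputable def boundary : SingularChain R (n + 1) X →ₗ[R] SingularChain R n X :=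
  ∑ i : Fin (n + 1), (-1 : R) ^ (i : ℕ) • Finsupp.lmapDomain R R (·.comp (face i))

/-- The chain map induced by a continuous map. -/
noncomputable def map (f : C(X, Y)) : SingularChain R n X →ₗ[R] SingularChain R n Y :=
  Finsupp.lmapDomain R R f.comp

/-- The image of an affine chain under a singular simplex. -/
noncomputable def ofAffine (s : C(stdSimplex ℝ (Fin k), X)) :
    AffineChain R n (stdSimplex ℝ (Fin k)) →ₗ[R] SingularChain R n X :=
  Finsupp.lmapDomain R R fun l ↦ s.comp (affineSimplex l)

/-- The identity of the standard simplex, as an affine chain. -/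
noncomputable def vertices (R : Type*) [CommRing R] (n : ℕ) :
    AffineChain R n (stdSimplex ℝ (Fin n)) :=
  single stdSimplex.vertex 1

lemma boundary_single (s : C(stdSimplex ℝ (Fin (n + 1)), X)) :
    boundary (single s (1 : R)) =
      ∑ i : Fin (n + 1), (-1 : R) ^ (i : ℕ) • single (s.comp (face i)) 1 := by
  simp [boundary]

@[simp]
lemma map_single (f : C(X, Y)) (s : C(stdSimplex ℝ (Fin n), X)) (r : R) :
    map f (single s r) = single (f.comp s) r := by
  simp [map]

@[simp]
lemma ofAffine_single (s : C(stdSimplex ℝ (Fin k), X)) (l : Fin n → stdSimplex ℝ (Fin k)) (r : R) :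
    ofAffine s (single l r) = single (s.comp (affineSimplex l)) r := by
  simp [ofAffine]

lemma ofAffine_vertices (s : C(stdSimplex ℝ (Fin n), X)) :
    ofAffine s (vertices R n) = single s 1 := by
  rw [vertices, ofAffine_single, affineSimplex.vertex, ContinuousMap.comp_id]

lemma map_affineSimplex_vertices (l : Fin n → stdSimplex ℝ (Fin k)) :
    AffineChain.map (affineSimplex l) (vertices R n) = single l 1 := by
  rw [vertices, AffineChain.map_single]
  exact congrArg (single · 1) (funext (affineSimplex.apply_vertex l))

lemma boundary_ofAffine (s : C(stdSimplex ℝ (Fin k), X))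
    (c : AffineChain R (n + 1) (stdSimplex ℝ (Fin k))) :
    boundary (ofAffine s c) = ofAffine s (AffineChain.boundary c) := by
  refine LinearMap.congr_fun (f := boundary ∘ₗ ofAffine s) (g := ofAffine s ∘ₗ AffineChain.boundary)
    (linearMap_ext_single fun l ↦ ?_) c
  simp only [LinearMap.comp_apply, ofAffine_single, AffineChain.boundary_single, boundary_single,
    map_sum, map_smul]
  refine Finset.sum_congr rfl fun i _ ↦ ?_
  rw [ContinuousMap.comp_assoc]
  congr 3
  exact ContinuousMap.ext (affineSimplex.apply_map l i.succAbove)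

lemma ofAffine_comp_affineSimplex (s : C(stdSimplex ℝ (Fin k), X))
    {m : ℕ} (l : Fin m → stdSimplex ℝ (Fin k)) (c : AffineChain R n (stdSimplex ℝ (Fin m))) :
    ofAffine (s.comp (affineSimplex l)) c =
      ofAffine s (AffineChain.map (affineSimplex l) c) := by
  refine LinearMap.congr_fun (f := ofAffine (s.comp (affineSimplex l)))
    (g := ofAffine s ∘ₗ AffineChain.map (affineSimplex l)) (linearMap_ext_single fun μ ↦ ?_) c
  simp [ContinuousMap.comp_assoc, affineSimplex.comp_affineSimplex]

lemma map_boundary (f : C(X, Y)) (c : SingularChain R (n + 1) X) :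
    map f (boundary c) = boundary (map f c) := by
  refine LinearMap.congr_fun (f := map f ∘ₗ boundary) (g := boundary ∘ₗ map f)
    (linearMap_ext_single fun s ↦ ?_) c
  simp [boundary_single, ContinuousMap.comp_assoc]

lemma map_comp (f : C(Y, Z)) (g : C(X, Y)) (c : SingularChain R n X) :
    map (f.comp g) c = map f (map g c) := by
  refine LinearMap.congr_fun (f := map (f.comp g)) (g := map f ∘ₗ map g)
    (linearMap_ext_single fun s ↦ ?_) c
  simp [ContinuousMap.comp_assoc]

lemma map_id (c : SingularChain R n X) : map (.id X) c = c := by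
  refine LinearMap.congr_fun (f := map (.id X)) (g := .id) (linearMap_ext_single fun s ↦ ?_) c
  simp

lemma boundary_boundary (c : SingularChain R (n + 2) X) : boundary (boundary c) = 0 := by
  refine LinearMap.congr_fun (f := boundary ∘ₗ boundary) (g := 0)
    (linearMap_ext_single fun s ↦ ?_) c
  rw [LinearMap.comp_apply, ← ofAffine_vertices, boundary_ofAffine, boundary_ofAffine,
    AffineChain.boundary_boundary, map_zero, LinearMap.zero_apply]

/-- Barycentric subdivision of singular chains. -/
noncomputable def subdivision (n : ℕ) : SingularChain R n X →ₗ[R] SingularChain R n X :=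
  Finsupp.linearCombination R fun s ↦
    ofAffine s (AffineChain.subdivision affineSimplex.barycenter n (vertices R n))

/-- The chain homotopy from the identity to barycentric subdivision. -/
noncomputable def subdivisionHomotopy (n : ℕ) :
    SingularChain R n X →ₗ[R] SingularChain R (n + 1) X :=
  Finsupp.linearCombination R fun s ↦
    ofAffine s (AffineChain.subdivisionHomotopy affineSimplex.barycenter n (vertices R n))

lemma subdivision_ofAffine (s : C(stdSimplex ℝ (Fin k), X))
    (c : AffineChain R n (stdSimplex ℝ (Fin k))) :
    subdivision n (ofAffine s c) =
      ofAffine s (AffineChain.subdivision affineSimplex.barycenter n c) := by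
  refine LinearMap.congr_fun (f := subdivision n ∘ₗ ofAffine s)
    (g := ofAffine s ∘ₗ AffineChain.subdivision affineSimplex.barycenter n)
    (linearMap_ext_single fun l ↦ ?_) c
  simp [subdivision, ofAffine_comp_affineSimplex, map_affineSimplex_vertices,
    AffineChain.map_subdivision (affineSimplex.apply_barycenter l)]

lemma subdivisionHomotopy_ofAffine (s : C(stdSimplex ℝ (Fin k), X))
    (c : AffineChain R n (stdSimplex ℝ (Fin k))) :
    subdivisionHomotopy n (ofAffine s c) =
      ofAffine s (AffineChain.subdivisionHomotopy affineSimplex.barycenter n c) := by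
  refine LinearMap.congr_fun (f := subdivisionHomotopy n ∘ₗ ofAffine s)
    (g := ofAffine s ∘ₗ AffineChain.subdivisionHomotopy affineSimplex.barycenter n)
    (linearMap_ext_single fun l ↦ ?_) c
  simp [subdivisionHomotopy, ofAffine_comp_affineSimplex, map_affineSimplex_vertices,
    AffineChain.map_subdivisionHomotopy (affineSimplex.apply_barycenter l)]

lemma boundary_subdivision (c : SingularChain R (n + 1) X) :
    boundary (subdivision (n + 1) c) = subdivision n (boundary c) := by
  refine LinearMap.congr_fun (f := boundary ∘ₗ subdivision (n + 1)) (g := subdivision n ∘ₗ boundary)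
    (linearMap_ext_single fun s ↦ ?_) c
  simp only [LinearMap.comp_apply, ← ofAffine_vertices s, subdivision_ofAffine, boundary_ofAffine,
    AffineChain.boundary_subdivision]

lemma boundary_subdivisionHomotopy (c : SingularChain R (n + 1) X) :
    boundary (subdivisionHomotopy (n + 1) c) + subdivisionHomotopy n (boundary c) =
      c - subdivision (n + 1) c := by
  refine LinearMap.congr_fun
    (f := boundary ∘ₗ subdivisionHomotopy (n + 1) + subdivisionHomotopy n ∘ₗ boundary)
    (g := .id - subdivision (n + 1)) (linearMap_ext_single fun s ↦ ?_) c
  simp only [LinearMap.add_apply, LinearMap.sub_apply, LinearMap.id_apply, LinearMap.comp_apply,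
    ← ofAffine_vertices s, subdivision_ofAffine, subdivisionHomotopy_ofAffine, boundary_ofAffine,
    ← map_add, ← map_sub, AffineChain.boundary_subdivisionHomotopy]

end SingularChain

section Mesh

variable {R : Type*} [CommRing R] {n k : ℕ}

lemma affineSimplex_mem_convexHull (l : Fin n → stdSimplex ℝ (Fin k)) (t : stdSimplex ℝ (Fin n)) :
    (affineSimplex l t : Fin k → ℝ) ∈ convexHull ℝ (Set.range fun i ↦ (l i : Fin k → ℝ)) := by
  have hsum : (affineSimplex l t : Fin k → ℝ) = ∑ i, t i • (l i : Fin k → ℝ) := by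
    ext j
    simp only [Finset.sum_apply]
    rfl
  rw [hsum]
  exact (convex_convexHull ℝ _).sum_mem (fun i _ ↦ t.2.1 i) t.2.2
    fun i _ ↦ subset_convexHull ℝ _ (Set.mem_range_self i)

lemma dist_le_of_mem_convexHull {l : Fin n → stdSimplex ℝ (Fin k)} {x y : stdSimplex ℝ (Fin k)}
    {r : ℝ} (hr : ∀ i, dist (l i) y ≤ r)
    (hx : (x : Fin k → ℝ) ∈ convexHull ℝ (Set.range fun i ↦ (l i : Fin k → ℝ))) : dist x y ≤ r :=
  convexHull_min (Set.range_subset_iff.2 hr) (convex_closedBall (y : Fin k → ℝ) r) hx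

lemma dist_barycenter_le {l : Fin (n + 1) → stdSimplex ℝ (Fin k)} {r : ℝ}
    (hr : ∀ i j, dist (l i) (l j) ≤ r) (j : Fin (n + 1)) :
    dist (l j) (affineSimplex.barycenter n l) ≤ (n / (n + 1) : ℝ) * r := by
  have hn : ((n : ℝ) + 1) ≠ 0 := by positivity
  have hsum : (l j).1 - (affineSimplex.barycenter n l).1 =
      ∑ i ∈ Finset.univ.erase j, ((n : ℝ) + 1)⁻¹ • ((l j).1 - (l i).1) := by
    rw [Finset.sum_erase _ (by simp)]
    ext a
    have hbary : (affineSimplex.barycenter n l).1 a = ∑ i, ((n : ℝ) + 1)⁻¹ * (l i).1 a := by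
      change ∑ i, ((Fintype.card (Fin (n + 1)) : ℝ))⁻¹ * (l i).1 a = _
      simp
    rw [Pi.sub_apply, hbary, Finset.sum_apply]
    simp only [Pi.smul_apply, Pi.sub_apply, smul_eq_mul, mul_sub, Finset.sum_sub_distrib]
    simp
    field_simp
  rw [Subtype.dist_eq, dist_eq_norm, hsum]
  refine (norm_sum_le_of_le (f := fun i ↦ ((n : ℝ) + 1)⁻¹ • ((l j).1 - (l i).1))
    (n := fun _ ↦ ((n : ℝ) + 1)⁻¹ * r) (Finset.univ.erase j) fun i _ ↦ ?_).trans_eq ?_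
  · rw [norm_smul, Real.norm_of_nonneg (by positivity), ← dist_eq_norm]
    exact mul_le_mul_of_nonneg_left (hr j i) (by positivity)
  · simp [div_eq_mul_inv, mul_assoc]

namespace AffineChain

lemma subdivision_mem_supported_convexHull (l : Fin n → stdSimplex ℝ (Fin k)) :
    subdivision affineSimplex.barycenter n (single l (1 : R)) ∈ Finsupp.supported R R
      {μ | ∀ i, (μ i : Fin k → ℝ) ∈ convexHull ℝ (Set.range fun j ↦ (l j : Fin k → ℝ))} := by
  induction n with
  | zero => exact Finsupp.single_mem_supported R 1 fun i ↦ i.elim0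
  | succ n ih =>
    rw [subdivision_single, boundary_single]
    simp only [map_sum, map_smul]
    refine Submodule.sum_mem _ fun a _ ↦ Submodule.smul_mem _ _ ?_
    refine linearMap_mem_of_mem_supported (cone _) (fun μ hμ ↦ ?_) (ih (l ∘ a.succAbove))
    rw [cone_single]
    refine Finsupp.single_mem_supported R 1 fun i ↦ ?_
    cases i using Fin.cases with
    | zero => exact affineSimplex_mem_convexHull l _
    | succ i =>
      exact convexHull_mono (Set.range_comp_subset_range a.succAbove fun j ↦ (l j : Fin k → ℝ))
        (hμ i)

/-- The affine simplices of diameter at most `r`. -/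
def smallSimplices (n k : ℕ) (r : ℝ) : Set (Fin n → stdSimplex ℝ (Fin k)) :=
  {l | ∀ i j, dist (l i) (l j) ≤ r}

lemma subdivision_single_mem_supported_smallSimplices {l : Fin n → stdSimplex ℝ (Fin k)} {r : ℝ}
    (hr : 0 ≤ r) (hl : l ∈ smallSimplices n k r) :
    subdivision affineSimplex.barycenter n (single l (1 : R)) ∈
      Finsupp.supported R R (smallSimplices n k ((n / (n + 1) : ℝ) * r)) := by
  induction n with
  | zero => exact Finsupp.single_mem_supported R 1 fun i ↦ i.elim0
  | succ n ih =>
    rw [subdivision_single, boundary_single]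
    simp only [map_sum, map_smul]
    refine Submodule.sum_mem _ fun a _ ↦ Submodule.smul_mem _ _ ?_
    have hface : subdivision affineSimplex.barycenter n (single (l ∘ a.succAbove) (1 : R)) ∈
        Finsupp.supported R R ({μ | ∀ i, (μ i).1 ∈ convexHull ℝ (Set.range fun j ↦
          (l (a.succAbove j)).1)} ∩ smallSimplices n k ((n / (n + 1) : ℝ) * r)) := by
      rw [Finsupp.supported_inter]
      exact ⟨subdivision_mem_supported_convexHull _,
        ih (l := l ∘ a.succAbove) fun i j ↦ hl _ _⟩
    refine linearMap_mem_of_mem_supported (cone _) (fun μ hμ ↦ ?_) hface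
    rw [cone_single]
    refine Finsupp.single_mem_supported R 1 ?_
    have hfactor : (n / (n + 1) : ℝ) * r ≤ ((n + 1 : ℕ) / ((n + 1 : ℕ) + 1) : ℝ) * r := by
      refine mul_le_mul_of_nonneg_right ?_ hr
      rw [div_le_div_iff₀ (by positivity) (by positivity)]
      push_cast
      nlinarith
    have hapex (i) : dist (μ i) (affineSimplex.barycenter n l) ≤
        ((n + 1 : ℕ) / ((n + 1 : ℕ) + 1) : ℝ) * r :=
      dist_le_of_mem_convexHull (fun j ↦ (dist_barycenter_le hl _).trans hfactor) (hμ.1 i)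
    intro i j
    cases i using Fin.cases <;> cases j using Fin.cases <;> simp only [Fin.cons_zero, Fin.cons_succ]
    · rw [dist_self]; positivity
    · rw [dist_comm]; exact hapex _
    · exact hapex _
    · exact (hμ.2 _ _).trans hfactor

lemma iterate_subdivision_mem_supported_smallSimplices (N : ℕ)
    (c : AffineChain R n (stdSimplex ℝ (Fin k))) :
    (subdivision affineSimplex.barycenter n)^[N] c ∈
      Finsupp.supported R R (smallSimplices n k ((n / (n + 1) : ℝ) ^ N)) := by
  induction N with
  | zero =>
    have hdiam (x y : stdSimplex ℝ (Fin k)) : dist x y ≤ 1 := by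
      refine (dist_pi_le_iff zero_le_one).2 fun a ↦ ?_
      rw [Real.dist_eq, abs_le]
      have hx : 0 ≤ x.1 a ∧ x.1 a ≤ 1 := ⟨stdSimplex.zero_le x a, stdSimplex.le_one x a⟩
      have hy : 0 ≤ y.1 a ∧ y.1 a ≤ 1 := ⟨stdSimplex.zero_le y a, stdSimplex.le_one y a⟩
      constructor <;> linarith
    have huniv : smallSimplices n k 1 = Set.univ :=
      Set.eq_univ_of_forall fun l i j ↦ hdiam _ _
    simp [huniv]
  | succ N ih =>
    rw [Function.iterate_succ_apply', pow_succ']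
    exact linearMap_mem_of_mem_supported _
      (fun l ↦ subdivision_single_mem_supported_smallSimplices (by positivity)) ih

end AffineChain

end Mesh

namespace SingularChain

variable {R : Type*} [CommRing R] {X Y : Type*} [TopologicalSpace X] [TopologicalSpace Y]
  {n k : ℕ} {A B : Set X}

/-- The singular chains all of whose simplices lie in `A`. -/
noncomputable def chainsIn (R : Type*) [CommRing R] (A : Set X) (n : ℕ) :
    Submodule R (SingularChain R n X) :=
  Finsupp.supported R R {s | ∀ t, s t ∈ A}

namespace chainsIn

lemma single_mem {s : C(stdSimplex ℝ (Fin n), X)} (hs : ∀ t, s t ∈ A) :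
    single s 1 ∈ chainsIn R A n :=
  Finsupp.single_mem_supported R 1 hs

lemma mono (h : A ⊆ B) : chainsIn R A n ≤ chainsIn R B n :=
  Finsupp.supported_mono fun _ hs t ↦ h (hs t)

lemma inf_eq : chainsIn R A n ⊓ chainsIn R B n = chainsIn R (A ∩ B) n := by
  rw [chainsIn, chainsIn, ← Finsupp.supported_inter]
  congr 1
  ext s
  exact forall_and.symm

lemma map_mem {f : C(X, Y)} {C : Set Y} (h : Set.MapsTo f A C) {c : SingularChain R n X}
    (hc : c ∈ chainsIn R A n) : map f c ∈ chainsIn R C n := by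
  refine linearMap_mem_of_mem_supported (map f) (fun s hs ↦ ?_) hc
  rw [map_single]
  exact single_mem fun t ↦ h (hs t)

lemma ofAffine_mem {s : C(stdSimplex ℝ (Fin k), X)} (hs : ∀ t, s t ∈ A)
    (c : AffineChain R n (stdSimplex ℝ (Fin k))) : ofAffine s c ∈ chainsIn R A n := by
  refine linearMap_mem_of_mem_supported (s := Set.univ) (ofAffine s) (fun l _ ↦ ?_) (by simp)
  rw [ofAffine_single]
  exact single_mem fun t ↦ hs _

lemma boundary_mem {c : SingularChain R (n + 1) X} (hc : c ∈ chainsIn R A (n + 1)) :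
    boundary c ∈ chainsIn R A n := by
  refine linearMap_mem_of_mem_supported boundary (fun s hs ↦ ?_) hc
  rw [← ofAffine_vertices, boundary_ofAffine]
  exact ofAffine_mem hs _

lemma subdivision_mem {c : SingularChain R n X} (hc : c ∈ chainsIn R A n) :
    subdivision n c ∈ chainsIn R A n := by
  refine linearMap_mem_of_mem_supported (subdivision n) (fun s hs ↦ ?_) hc
  rw [← ofAffine_vertices, subdivision_ofAffine]
  exact ofAffine_mem hs _

lemma subdivisionHomotopy_mem {c : SingularChain R n X} (hc : c ∈ chainsIn R A n) :
    subdivisionHomotopy n c ∈ chainsIn R A (n + 1) := by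
  refine linearMap_mem_of_mem_supported (subdivisionHomotopy n) (fun s hs ↦ ?_) hc
  rw [← ofAffine_vertices, subdivisionHomotopy_ofAffine]
  exact ofAffine_mem hs _

end chainsIn

lemma iterate_subdivision_ofAffine (N : ℕ) (s : C(stdSimplex ℝ (Fin k), X))
    (c : AffineChain R n (stdSimplex ℝ (Fin k))) :
    (subdivision n)^[N] (ofAffine s c) =
      ofAffine s ((AffineChain.subdivision affineSimplex.barycenter n)^[N] c) :=
  (Function.Semiconj.iterate_right (f := ofAffine s) (fun c ↦ (subdivision_ofAffine s c).symm) N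
    c).symm

lemma boundary_iterate_subdivision (N : ℕ) (c : SingularChain R (n + 1) X) :
    boundary ((subdivision (n + 1))^[N] c) = (subdivision n)^[N] (boundary c) :=
  Function.Semiconj.iterate_right boundary_subdivision N c

/-- The chains that are sums of a chain in `A` and a chain in `B`. -/
noncomputable def smallChains (R : Type*) [CommRing R] (A B : Set X) (n : ℕ) :
    Submodule R (SingularChain R n X) :=
  chainsIn R A n ⊔ chainsIn R B n

namespace smallChains

lemma subdivision_mem {c : SingularChain R n X} (hc : c ∈ smallChains R A B n) :
    subdivision n c ∈ smallChains R A B n := by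
  obtain ⟨a, ha, b, hb, rfl⟩ := Submodule.mem_sup.1 hc
  rw [map_add]
  exact Submodule.add_mem_sup (chainsIn.subdivision_mem ha) (chainsIn.subdivision_mem hb)

lemma subdivisionHomotopy_mem {c : SingularChain R n X} (hc : c ∈ smallChains R A B n) :
    subdivisionHomotopy n c ∈ smallChains R A B (n + 1) := by
  obtain ⟨a, ha, b, hb, rfl⟩ := Submodule.mem_sup.1 hc
  rw [map_add]
  exact Submodule.add_mem_sup (chainsIn.subdivisionHomotopy_mem ha)
    (chainsIn.subdivisionHomotopy_mem hb)

lemma iterate_subdivision_mem (N : ℕ) {c : SingularChain R n X} (hc : c ∈ smallChains R A B n) :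
    (subdivision n)^[N] c ∈ smallChains R A B n :=
  Set.MapsTo.iterate (s := {c | c ∈ smallChains R A B n}) (fun _ ↦ subdivision_mem) N hc

end smallChains

lemma exists_ball_mapsTo_of_isOpen_cover {K : Type*} [PseudoMetricSpace K] [CompactSpace K]
    (hA : IsOpen A) (hB : IsOpen B) (s : C(K, X)) (hs : ∀ t, s t ∈ A ∪ B) :
    ∃ δ > 0, ∀ x, Set.MapsTo s (Metric.ball x δ) A ∨ Set.MapsTo s (Metric.ball x δ) B := by
  obtain ⟨δ, hδ, hleb⟩ := lebesgue_number_lemma_of_metric_sUnion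
    (s := (Set.univ : Set K)) (c := {s ⁻¹' A, s ⁻¹' B}) isCompact_univ
    (by simp [hA.preimage s.continuous, hB.preimage s.continuous])
    (fun t _ ↦ by simpa using hs t)
  exact ⟨δ, hδ, fun x ↦ by simpa [Set.mapsTo_iff_subset_preimage] using hleb x (Set.mem_univ _)⟩

lemma exists_iterate_subdivision_single_mem_smallChains (hA : IsOpen A) (hB : IsOpen B)
    {s : C(stdSimplex ℝ (Fin (n + 1)), X)} (hs : ∀ t, s t ∈ A ∪ B) :
    ∃ N, (subdivision (n + 1))^[N] (single s 1) ∈ smallChains R A B (n + 1) := by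
  obtain ⟨δ, hδ, hball⟩ := exists_ball_mapsTo_of_isOpen_cover hA hB s hs
  have hratio : ((n + 1 : ℕ) / ((n + 1 : ℕ) + 1) : ℝ) < 1 :=
    (div_lt_one (by positivity)).2 (lt_add_one _)
  obtain ⟨N, hN⟩ := exists_pow_lt_of_lt_one hδ hratio
  refine ⟨N, ?_⟩
  rw [← ofAffine_vertices, iterate_subdivision_ofAffine]
  refine linearMap_mem_of_mem_supported (ofAffine s) (fun μ hμ ↦ ?_)
    (AffineChain.iterate_subdivision_mem_supported_smallSimplices N (vertices R (n + 1)))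
  rw [ofAffine_single]
  have hmem (t) : affineSimplex μ t ∈ Metric.ball (μ 0) δ :=
    (dist_le_of_mem_convexHull (hμ · 0) (affineSimplex_mem_convexHull μ t)).trans_lt hN
  rcases hball (μ 0) with h | h
  · exact Submodule.mem_sup_left (chainsIn.single_mem fun t ↦ h (hmem t))
  · exact Submodule.mem_sup_right (chainsIn.single_mem fun t ↦ h (hmem t))

lemma exists_iterate_subdivision_mem_smallChains (hA : IsOpen A) (hB : IsOpen B)
    {c : SingularChain R (n + 1) X} (hc : c ∈ chainsIn R (A ∪ B) (n + 1)) :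
    ∃ N, (subdivision (n + 1))^[N] c ∈ smallChains R A B (n + 1) := by
  rw [chainsIn, Finsupp.supported_eq_span_single] at hc
  induction hc using Submodule.span_induction with
  | mem c hc =>
    obtain ⟨s, hs, rfl⟩ := hc
    exact exists_iterate_subdivision_single_mem_smallChains hA hB hs
  | zero => exact ⟨0, zero_mem _⟩
  | add x y _ _ hx hy =>
    obtain ⟨N, hN⟩ := hx
    obtain ⟨M, hM⟩ := hy
    refine ⟨N + M, ?_⟩
    rw [iterate_map_add]
    refine add_mem ?_ ?_
    · rw [add_comm N, Function.iterate_add_apply]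
      exact smallChains.iterate_subdivision_mem M hN
    · rw [Function.iterate_add_apply]
      exact smallChains.iterate_subdivision_mem N hM
  | smul r x _ hx =>
    obtain ⟨N, hN⟩ := hx
    refine ⟨N, ?_⟩
    have hsmul : (subdivision (n + 1))^[N] (r • x) = r • (subdivision (n + 1))^[N] x :=
      Function.Commute.iterate_left (fun c ↦ map_smul (subdivision (n + 1)) r c) N x
    rw [hsmul]
    exact Submodule.smul_mem _ r hN

lemma exists_sub_iterate_subdivision_sub_boundary_mem (N : ℕ) {c : SingularChain R (n + 1) X}
    (hc : c ∈ chainsIn R (A ∪ B) (n + 1)) (h : boundary c ∈ smallChains R A B n) :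
    ∃ e ∈ chainsIn R (A ∪ B) (n + 2),
      c - (subdivision (n + 1))^[N] c - boundary e ∈ smallChains R A B (n + 1) := by
  induction N with
  | zero => exact ⟨0, zero_mem _, by simp⟩
  | succ N ih =>
    obtain ⟨e, he, hsmall⟩ := ih
    set c' := (subdivision (n + 1))^[N] c with hc'
    have hc'mem : c' ∈ chainsIn R (A ∪ B) (n + 1) :=
      Set.MapsTo.iterate (s := {c | c ∈ chainsIn R (A ∪ B) (n + 1)})
        (fun _ ↦ chainsIn.subdivision_mem) N hc
    have hboundary : boundary c' ∈ smallChains R A B n := by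
      rw [hc', boundary_iterate_subdivision]
      exact smallChains.iterate_subdivision_mem N h
    refine ⟨e + subdivisionHomotopy (n + 1) c',
      add_mem he (chainsIn.subdivisionHomotopy_mem hc'mem), ?_⟩
    convert add_mem hsmall (smallChains.subdivisionHomotopy_mem hboundary) using 1
    rw [Function.iterate_succ_apply', ← hc', map_add, ← sub_add_sub_cancel c c',
      ← boundary_subdivisionHomotopy]
    abel

theorem exists_sub_boundary_mem_smallChains (hA : IsOpen A) (hB : IsOpen B)
    {c : SingularChain R (n + 1) X} (hc : c ∈ chainsIn R (A ∪ B) (n + 1))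
    (h : boundary c ∈ smallChains R A B n) :
    ∃ e ∈ chainsIn R (A ∪ B) (n + 2), c - boundary e ∈ smallChains R A B (n + 1) := by
  obtain ⟨N, hN⟩ := exists_iterate_subdivision_mem_smallChains hA hB hc
  obtain ⟨e, he, hsmall⟩ := exists_sub_iterate_subdivision_sub_boundary_mem N hc h
  refine ⟨e, he, ?_⟩
  convert add_mem hsmall hN using 1
  abel

end SingularChain

section SingularComplex

open CategoryTheory

universe u

variable (R : Type u) [CommRing R] (X : Type u) [TopologicalSpace X]

/-- Mathlib's complex of singular chains, whose homology is `SingularHomology`. -/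
noncomputable abbrev singularComplex : ChainComplex (ModuleCat R) ℕ :=
  (AlgebraicTopology.alternatingFaceMapComplex (ModuleCat R)).obj
    (((SimplicialObject.whiskering _ _).obj (ModuleCat.free R)).obj (TopCat.toSSet.obj (.of X)))

/-- The chain map between singular complexes induced by a continuous map. -/
noncomputable abbrev singularComplexMap {X Y : Type u} [TopologicalSpace X] [TopologicalSpace Y]
    (f : C(X, Y)) : singularComplex R X ⟶ singularComplex R Y :=
  (AlgebraicTopology.alternatingFaceMapComplex (ModuleCat R)).map
    (((SimplicialObject.whiskering _ _).obj (ModuleCat.free R)).map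
      (TopCat.toSSet.map (TopCat.ofHom f)))

/-- Mathlib's singular `n`-chains are the chains of singular simplices with `n + 1` vertices. -/
noncomputable def singularComplexEquiv (n : ℕ) :
    (singularComplex R X).X n ≃ₗ[R] SingularChain R (n + 1) X :=
  Finsupp.domLCongr (TopCat.toSSetObjEquiv (.of X) (.op (.mk n)))

variable {X}

lemma singularComplexEquiv_freeMk {n : ℕ} (s : (TopCat.toSSet.obj (.of X)).obj (.op (.mk n))) :
    singularComplexEquiv R X n (ModuleCat.freeMk (R := R) s) =
      single (TopCat.toSSetObjEquiv (.of X) (.op (.mk n)) s) 1 :=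
  Finsupp.domLCongr_single _ _ _

lemma singularComplex_d_freeMk {n : ℕ} (s : (TopCat.toSSet.obj (.of X)).obj (.op (.mk (n + 1)))) :
    (singularComplex R X).d (n + 1) n (ModuleCat.freeMk (R := R) s) =
      ∑ i : Fin (n + 2), (-1 : ℤ) ^ (i : ℕ) •
        ModuleCat.freeMk (R := R) ((TopCat.toSSet.obj (.of X)).δ i s) := by
  rw [AlgebraicTopology.alternatingFaceMapComplex_obj_d,
    AlgebraicTopology.AlternatingFaceMapComplex.objD]
  refine (LinearMap.congr_fun (ModuleCat.hom_sum _ _) _).trans ?_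
  refine (LinearMap.sum_apply _ _ _).trans (Finset.sum_congr rfl fun i _ ↦ ?_)
  exact congrArg ((-1 : ℤ) ^ (i : ℕ) • ·) (ModuleCat.free_map_apply _ s)

lemma singularComplexEquiv_d {n : ℕ} (c : (singularComplex R X).X (n + 1)) :
    singularComplexEquiv R X n ((singularComplex R X).d (n + 1) n c) =
      SingularChain.boundary (singularComplexEquiv R X (n + 1) c) := by
  refine LinearMap.congr_fun
    (f := (singularComplexEquiv R X n).toLinearMap ∘ₗ ((singularComplex R X).d (n + 1) n).hom)
    (g := SingularChain.boundary ∘ₗ (singularComplexEquiv R X (n + 1)).toLinearMap)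
    (linearMap_ext_single fun s ↦ ?_) c
  refine (congrArg (singularComplexEquiv R X n) (singularComplex_d_freeMk R s)).trans ?_
  refine .trans ?_ (congrArg SingularChain.boundary (singularComplexEquiv_freeMk R s)).symm
  rw [SingularChain.boundary_single]
  refine (map_sum _ _ _).trans (Finset.sum_congr rfl fun i _ ↦ ?_)
  refine (map_zsmul _ _ _).trans ?_
  rw [singularComplexEquiv_freeMk, ← Int.cast_smul_eq_zsmul R]
  push_cast
  congr 3

lemma singularComplexEquiv_map {Y : Type u} [TopologicalSpace Y] (f : C(X, Y)) {n : ℕ}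
    (c : (singularComplex R X).X n) :
    singularComplexEquiv R Y n ((singularComplexMap R f).f n c) =
      SingularChain.map f (singularComplexEquiv R X n c) := by
  refine LinearMap.congr_fun
    (f := (singularComplexEquiv R Y n).toLinearMap ∘ₗ ((singularComplexMap R f).f n).hom)
    (g := SingularChain.map f ∘ₗ (singularComplexEquiv R X n).toLinearMap)
    (linearMap_ext_single fun s ↦ ?_) c
  refine (congrArg (singularComplexEquiv R Y n) (ModuleCat.free_map_apply _ s)).trans ?_
  refine .trans ?_ (congrArg (SingularChain.map f) (singularComplexEquiv_freeMk R s)).symm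
  rw [singularComplexEquiv_freeMk, SingularChain.map_single]
  rfl

end SingularComplex

namespace SingularChain

section Cycles

variable {X Y : Type*} [TopologicalSpace X] [TopologicalSpace Y] {n : ℕ}

/-- The cycles of the augmented singular complex; every chain of degree `-1` is a cycle. -/
noncomputable def cycles (R : Type*) [CommRing R] (X : Type*) [TopologicalSpace X] :
    ∀ n, Submodule R (SingularChain R n X)
  | 0 => ⊤
  | _ + 1 => LinearMap.ker boundary

/-- The boundaries of the augmented singular complex. -/
noncomputable def boundaries (R : Type*) [CommRing R] (X : Type*) [TopologicalSpace X] (n : ℕ) :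
    Submodule R (SingularChain R n X) :=
  LinearMap.range boundary

variable {R : Type*} [CommRing R]

@[simp]
lemma mem_cycles_succ {c : SingularChain R (n + 1) X} :
    c ∈ cycles R X (n + 1) ↔ boundary c = 0 :=
  Iff.rfl

lemma boundary_mem_cycles (c : SingularChain R (n + 1) X) : boundary c ∈ cycles R X n := by
  cases n with
  | zero => exact Submodule.mem_top
  | succ n => exact boundary_boundary c

lemma map_mem_cycles (f : C(X, Y)) {c : SingularChain R n X} (hc : c ∈ cycles R X n) :
    map f c ∈ cycles R Y n := by
  cases n with
  | zero => exact Submodule.mem_top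
  | succ n => rw [mem_cycles_succ, ← map_boundary, mem_cycles_succ.1 hc, map_zero]

lemma map_mem_boundaries (f : C(X, Y)) {c : SingularChain R n X} (hc : c ∈ boundaries R X n) :
    map f c ∈ boundaries R Y n := by
  obtain ⟨e, rfl⟩ := hc
  exact ⟨map f e, (map_boundary f e).symm⟩

end Cycles

section HomotopyInvariance

open CategoryTheory

universe u

variable {R : Type u} [CommRing R] {X Y : Type u} [TopologicalSpace X] [TopologicalSpace Y]
  {f g : C(X, Y)}

lemma map_sub_map_mem_boundaries (h : f.Homotopic g) {n : ℕ} {c : SingularChain R n X}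
    (hc : c ∈ cycles R X n) : map f c - map g c ∈ boundaries R Y n := by
  obtain ⟨F⟩ := h
  let H : Homotopy (singularComplexMap R f) (singularComplexMap R g) :=
    ((TopCat.Homotopy.toSSet (f := TopCat.ofHom f) (g := TopCat.ofHom g)
      F).toSimplicialObjectHomotopy.whiskerRight (ModuleCat.free R)).toChainHomotopy
  cases n with
  | zero =>
    have hfg : (f.comp : C(stdSimplex ℝ (Fin 0), X) → _) = g.comp :=
      funext fun s ↦ ContinuousMap.ext fun t ↦ by simpa using stdSimplex.sum_eq_one t
    rw [map, map, hfg, sub_self]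
    exact zero_mem _
  | succ n =>
    obtain ⟨c, rfl⟩ := (singularComplexEquiv R X n).surjective c
    have hnext : dNext n H.hom c = 0 := by
      cases n with
      | zero =>
        rw [dNext_eq_zero H.hom 0 (by simp)]
        rfl
      | succ n =>
        rw [mem_cycles_succ, ← singularComplexEquiv_d] at hc
        rw [dNext_eq H.hom (i' := n) rfl]
        refine (congrArg (H.hom n (n + 1)) ?_).trans (map_zero _)
        exact (singularComplexEquiv R X n).injective (hc.trans (map_zero _).symm)
    have hprev : prevD n H.hom c = (singularComplex R Y).d (n + 1) n (H.hom n (n + 1) c) := by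
      rw [prevD_eq H.hom (j' := n + 1) rfl]
      rfl
    have hcomm : (singularComplexMap R f).f n c =
        dNext n H.hom c + prevD n H.hom c + (singularComplexMap R g).f n c :=
      congrArg (fun φ : (singularComplex R X).X n ⟶ (singularComplex R Y).X n ↦ φ c) (H.comm n)
    refine ⟨singularComplexEquiv R Y (n + 1) (H.hom n (n + 1) c), ?_⟩
    rw [← singularComplexEquiv_d, ← singularComplexEquiv_map, ← singularComplexEquiv_map,
      ← map_sub, hcomm, hnext, zero_add, hprev, add_sub_cancel_right]

end HomotopyInvariance

end SingularChain

/-! ### Reduced homology -/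

/-- The quotient `C / (B ⊓ C)` of a submodule `C` by the elements of `B` in it: the homology of a
complex with cycles `C` and boundaries `B`. -/
def Subquotient {R M : Type*} [CommRing R] [AddCommGroup M] [Module R M] (C B : Submodule R M) :=
  C ⧸ B.submoduleOf C

namespace Subquotient

variable {R M N : Type*} [CommRing R] [AddCommGroup M] [Module R M] [AddCommGroup N] [Module R N]
  {C B : Submodule R M} {C' B' : Submodule R N}

instance : AddCommGroup (Subquotient C B) :=
  inferInstanceAs (AddCommGroup (C ⧸ B.submoduleOf C))

instance : Module R (Subquotient C B) :=
  inferInstanceAs (Module R (C ⧸ B.submoduleOf C))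

/-- The class of an element of `C`. -/
def mk : C →ₗ[R] Subquotient C B :=
  (B.submoduleOf C).mkQ

lemma mk_surjective : Function.Surjective (mk : C →ₗ[R] Subquotient C B) :=
  Submodule.mkQ_surjective _

lemma mk_eq_zero {c : C} : (mk c : Subquotient C B) = 0 ↔ c.1 ∈ B :=
  Submodule.Quotient.mk_eq_zero _

lemma mk_eq_mk {c c' : C} : (mk c : Subquotient C B) = mk c' ↔ c.1 - c'.1 ∈ B :=
  Submodule.Quotient.eq _

lemma subsingleton_of_le (h : C ≤ B) : Subsingleton (Subquotient C B) := by
  refine subsingleton_of_forall_eq 0 fun x ↦ ?_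
  obtain ⟨c, rfl⟩ := mk_surjective x
  exact mk_eq_zero.2 (h c.2)

/-- The map of subquotients induced by a linear map. -/
def map (f : M →ₗ[R] N) (hC : ∀ c ∈ C, f c ∈ C') (hB : ∀ b ∈ B, f b ∈ B') :
    Subquotient C B →ₗ[R] Subquotient C' B' :=
  Submodule.mapQ _ _ (f.restrict hC) fun b ↦ hB b

end Subquotient

/-- Reduced singular homology, indexed by number of vertices: `ReducedHomology R n X` is the group
`H̃_{n-1}(X; R)`, so that `ReducedHomology R 0 X` is nonzero only for empty `X`. -/
abbrev ReducedHomology (R : Type*) [CommRing R] (n : ℕ) (X : Type*) [TopologicalSpace X] :=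
  Subquotient (SingularChain.cycles R X n) (SingularChain.boundaries R X n)

namespace ReducedHomology

open SingularChain Subquotient

section Functoriality

variable {R : Type*} [CommRing R] {X Y Z : Type*} [TopologicalSpace X] [TopologicalSpace Y]
  [TopologicalSpace Z] {n : ℕ}

/-- The map on homology induced by a continuous map. -/
noncomputable def map (f : C(X, Y)) : ReducedHomology R n X →ₗ[R] ReducedHomology R n Y :=
  Subquotient.map (SingularChain.map f) (fun _ ↦ map_mem_cycles f) fun _ ↦ map_mem_boundaries f

lemma map_mk (f : C(X, Y)) (c : cycles R X n) :
    map f (mk c) = mk ⟨SingularChain.map f c, map_mem_cycles f c.2⟩ := rfl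

lemma map_comp (f : C(Y, Z)) (g : C(X, Y)) (x : ReducedHomology R n X) :
    map (f.comp g) x = map f (map g x) := by
  obtain ⟨c, rfl⟩ := mk_surjective x
  simp only [map_mk, SingularChain.map_comp]

lemma map_id (x : ReducedHomology R n X) : map (.id X) x = x := by
  obtain ⟨c, rfl⟩ := mk_surjective x
  simp only [map_mk, SingularChain.map_id]

end Functoriality

section LowDegree

variable {R : Type*} [CommRing R] {X : Type*} [TopologicalSpace X] {n : ℕ}

instance subsingleton_of_subsingleton [Nonempty X] [Subsingleton X] :
    Subsingleton (ReducedHomology R n X) := by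
  have hX (m) : Subsingleton C(stdSimplex ℝ (Fin m), X) := DFunLike.coe_injective.subsingleton
  let s (m) : C(stdSimplex ℝ (Fin m), X) := .const _ (Classical.arbitrary X)
  have hboundary (m) : boundary (single (s (m + 1)) (1 : R)) =
      if Even (m + 1) then 0 else single (s m) 1 := by
    simp only [boundary_single, Subsingleton.elim (ContinuousMap.comp _ _) (s m),
      ← Finset.sum_smul, Fin.sum_neg_one_pow, ite_smul, zero_smul, one_smul]
  refine subsingleton_of_le fun c hc ↦ ?_
  obtain ⟨r, rfl⟩ : ∃ r : R, c = r • single (s n) 1 := by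
    refine ⟨c (s n), Finsupp.ext fun t ↦ ?_⟩
    simp [Subsingleton.elim t (s n)]
  rcases n.even_or_odd with hn | hn
  · refine ⟨r • single (s (n + 1)) 1, ?_⟩
    rw [map_smul, hboundary, if_neg (by simpa [Nat.even_add_one] using hn)]
  · obtain ⟨n, rfl⟩ := Nat.exists_eq_succ_of_ne_zero hn.pos.ne'
    rw [mem_cycles_succ, map_smul, hboundary, if_neg (Nat.not_even_iff_odd.2 hn)] at hc
    have hr : r = 0 := by simpa using hc
    simp [hr]

lemma eq_of_isEmpty (s t : C(stdSimplex ℝ (Fin 0), X)) : s = t :=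
  ContinuousMap.ext fun x ↦ by simpa using stdSimplex.sum_eq_one x

instance subsingleton_zero [Nonempty X] : Subsingleton (ReducedHomology R 0 X) := by
  refine subsingleton_of_le fun c _ ↦ ?_
  let s : C(stdSimplex ℝ (Fin 1), X) := .const _ (Classical.arbitrary X)
  have hs : boundary (single s (1 : R)) = single (s.comp (face 0)) 1 := by
    simp [boundary_single]
  refine ⟨c (s.comp (face 0)) • single s 1, ?_⟩
  rw [map_smul, hs]
  ext t
  simp [eq_of_isEmpty t (s.comp (face 0))]

lemma nonempty_linearEquiv_of_isEmpty [IsEmpty X] : Nonempty (ReducedHomology R 0 X ≃ₗ[R] R) := by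
  have hΔ : IsEmpty (stdSimplex ℝ (Fin 0)) := ⟨fun t ↦ by simpa using stdSimplex.sum_eq_one t⟩
  let s : C(stdSimplex ℝ (Fin 0), X) := ⟨hΔ.elim, continuous_of_discreteTopology⟩
  have hmk : Function.Injective (mk : cycles R X 0 →ₗ[R] ReducedHomology R 0 X) := by
    refine (injective_iff_map_eq_zero _).2 fun c hc ↦ ?_
    obtain ⟨e, he⟩ := mk_eq_zero.1 hc
    have : IsEmpty C(stdSimplex ℝ (Fin 1), X) := ⟨fun t ↦ isEmptyElim (t (stdSimplex.vertex 0))⟩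
    rw [Subsingleton.elim e 0, map_zero] at he
    exact Subtype.ext he.symm
  have : Subsingleton C(stdSimplex ℝ (Fin 0), X) := ⟨eq_of_isEmpty⟩
  exact ⟨(LinearEquiv.ofBijective mk ⟨hmk, mk_surjective⟩).symm ≪≫ₗ
    LinearEquiv.ofTop (cycles R X 0) rfl ≪≫ₗ Finsupp.uniqueLinearEquiv R R s⟩

lemma exists_comp_face_eq_const (x y : X) (h : Joined x y) :
    ∃ s : C(stdSimplex ℝ (Fin 2), X),
      s.comp (face 0) = .const _ y ∧ s.comp (face 1) = .const _ x := by
  let γ := h.somePath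
  refine ⟨⟨fun t ↦ γ (stdSimplexHomeomorphUnitInterval t), by fun_prop⟩, ?_, ?_⟩
  · ext t
    rw [Subsingleton.elim t (stdSimplex.vertex 0)]
    have : face 0 (stdSimplex.vertex (0 : Fin 1)) = stdSimplex.vertex (S := ℝ) (1 : Fin 2) :=
      stdSimplex.map_vertex _ _
    change γ (stdSimplexHomeomorphUnitInterval (face 0 _)) = y
    rw [this, stdSimplexHomeomorphUnitInterval_one, γ.target]
  · ext t
    rw [Subsingleton.elim t (stdSimplex.vertex 0)]
    have : face 1 (stdSimplex.vertex (0 : Fin 1)) = stdSimplex.vertex (S := ℝ) (0 : Fin 2) :=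
      stdSimplex.map_vertex _ _
    change γ (stdSimplexHomeomorphUnitInterval (face 1 _)) = x
    rw [this, stdSimplexHomeomorphUnitInterval_zero, γ.source]

instance subsingleton_one [PathConnectedSpace X] : Subsingleton (ReducedHomology R 1 X) := by
  let v : stdSimplex ℝ (Fin 1) := stdSimplex.vertex 0
  let b : X := Classical.arbitrary X
  choose path hpath₀ hpath₁ using fun x ↦
    exists_comp_face_eq_const b x (PathConnectedSpace.joined b x)
  let W : SingularChain R 1 X →ₗ[R] SingularChain R 2 X :=
    Finsupp.lmapDomain R R fun s ↦ path (s v)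
  let B : SingularChain R 0 X →ₗ[R] SingularChain R 1 X :=
    Finsupp.lmapDomain R R fun _ ↦ .const _ b
  have hW : boundary ∘ₗ W = LinearMap.id - B ∘ₗ boundary := by
    refine linearMap_ext_single fun s ↦ ?_
    have hs : s = .const _ (s v) := by
      ext t
      rw [Subsingleton.elim t v, ContinuousMap.const_apply]
    simp [W, B, boundary_single, Fin.sum_univ_two, hpath₀, hpath₁, ← hs, sub_eq_add_neg]
  refine subsingleton_of_le fun c hc ↦ ⟨W c, ?_⟩
  have := LinearMap.congr_fun hW c
  rwa [LinearMap.sub_apply, LinearMap.comp_apply, LinearMap.comp_apply, mem_cycles_succ.1 hc,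
    map_zero, sub_zero] at this

end LowDegree

section HomotopyInvariance

universe u

variable {R : Type u} [CommRing R] {X Y : Type u} [TopologicalSpace X] [TopologicalSpace Y] {n : ℕ}

lemma map_eq_of_homotopic {f g : C(X, Y)} (h : f.Homotopic g) :
    (map f : ReducedHomology R n X →ₗ[R] ReducedHomology R n Y) = map g := by
  refine LinearMap.ext fun x ↦ ?_
  obtain ⟨c, rfl⟩ := mk_surjective x
  exact mk_eq_mk.2 (map_sub_map_mem_boundaries h c.2)

/-- The isomorphism in homology induced by a homotopy equivalence. -/
noncomputable def congr (e : X ≃ₕ Y) : ReducedHomology R n X ≃ₗ[R] ReducedHomology R n Y :=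
  .ofLinearMap (map e.toFun) (map e.invFun)
    (LinearMap.ext fun y ↦ by
      rw [LinearMap.comp_apply, ← map_comp, map_eq_of_homotopic e.right_inv, map_id]
      rfl)
    (LinearMap.ext fun x ↦ by
      rw [LinearMap.comp_apply, ← map_comp, map_eq_of_homotopic e.left_inv, map_id]
      rfl)

instance subsingleton_of_contractible [ContractibleSpace X] :
    Subsingleton (ReducedHomology R n X) :=
  (congr (ContractibleSpace.hequiv X PUnit.{u + 1}).some).toEquiv.subsingleton

lemma map_eq_zero_of_nullhomotopic {f : C(X, Y)} (h : f.Nullhomotopic) :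
    (map f : ReducedHomology R n X →ₗ[R] ReducedHomology R n Y) = 0 := by
  obtain ⟨y, hy⟩ := h
  have hconst : .const X y = (ContinuousMap.const PUnit.{u + 1} y).comp (.const X .unit) := rfl
  refine LinearMap.ext fun x ↦ ?_
  rw [map_eq_of_homotopic hy, hconst, map_comp, Subsingleton.elim (map _ x) 0, map_zero,
    LinearMap.zero_apply]

end HomotopyInvariance

end ReducedHomology

/-- The reduced homology of a subset `A`, computed with the chains of the ambient space that lie in
`A`; the degree convention is that of `ReducedHomology`. -/
abbrev ReducedHomologyOn (R : Type*) [CommRing R] (n : ℕ) {X : Type*} [TopologicalSpace X]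
    (A : Set X) :=
  Subquotient (SingularChain.cycles R X n ⊓ SingularChain.chainsIn R A n)
    ((SingularChain.chainsIn R A (n + 1)).map SingularChain.boundary)

namespace ReducedHomologyOn

open SingularChain Subquotient

section Functoriality

variable {R : Type*} [CommRing R] {X Y : Type*} [TopologicalSpace X] [TopologicalSpace Y] {n : ℕ}
  {A A' A'' : Set X} {B B' : Set Y}

/-- The homology class of a cycle lying in `A`. -/
noncomputable def of (c : SingularChain R n X) (hc : c ∈ cycles R X n) (hcA : c ∈ chainsIn R A n) :
    ReducedHomologyOn R n A :=
  mk ⟨c, hc, hcA⟩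

lemma exists_of_eq (x : ReducedHomologyOn R n A) : ∃ c hc hcA, of c hc hcA = x := by
  obtain ⟨⟨c, hc, hcA⟩, rfl⟩ := mk_surjective x
  exact ⟨c, hc, hcA, rfl⟩

/-- The map induced by a continuous map from `A` to `B`. -/
noncomputable def map (f : C(X, Y)) (h : Set.MapsTo f A B) :
    ReducedHomologyOn R n A →ₗ[R] ReducedHomologyOn R n B :=
  Subquotient.map (SingularChain.map f)
    (fun _ hc ↦ ⟨map_mem_cycles f hc.1, chainsIn.map_mem h hc.2⟩) <| by
      rintro _ ⟨c, hc, rfl⟩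
      exact ⟨_, chainsIn.map_mem h hc, (map_boundary f c).symm⟩

lemma map_of (f : C(X, Y)) (h : Set.MapsTo f A B) {c : SingularChain R n X}
    (hc : c ∈ cycles R X n) (hcA : c ∈ chainsIn R A n) :
    map f h (of c hc hcA) =
      of (SingularChain.map f c) (map_mem_cycles f hc) (chainsIn.map_mem h hcA) :=
  rfl

/-- The map induced by an inclusion of subsets. -/
noncomputable def incl (h : A ⊆ A') : ReducedHomologyOn R n A →ₗ[R] ReducedHomologyOn R n A' :=
  Subquotient.map LinearMap.id (fun _ hc ↦ ⟨hc.1, chainsIn.mono h hc.2⟩)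
    fun _ hb ↦ Submodule.map_mono (chainsIn.mono h) hb

lemma incl_of (h : A ⊆ A') {c : SingularChain R n X} (hc : c ∈ cycles R X n)
    (hcA : c ∈ chainsIn R A n) : incl h (of c hc hcA) = of c hc (chainsIn.mono h hcA) :=
  rfl

lemma incl_self (h : A ⊆ A) (x : ReducedHomologyOn R n A) : incl h x = x := by
  obtain ⟨c, rfl⟩ := mk_surjective x
  rfl

lemma incl_incl (h : A ⊆ A') (h' : A' ⊆ A'') (x : ReducedHomologyOn R n A) :
    incl h' (incl h x) = incl (h.trans h') x := by
  obtain ⟨c, rfl⟩ := mk_surjective x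
  rfl

lemma map_incl (f : C(X, Y)) (h : A ⊆ A') (h' : B ⊆ B') (hf : Set.MapsTo f A B)
    (hf' : Set.MapsTo f A' B') (x : ReducedHomologyOn R n A) :
    map f hf' (incl h x) = incl h' (map f hf x) := by
  obtain ⟨c, rfl⟩ := mk_surjective x
  rfl

instance subsingleton_empty : Subsingleton (ReducedHomologyOn R (n + 1) (∅ : Set X)) := by
  refine subsingleton_of_le fun c hc ↦ ?_
  have hempty : {s : C(stdSimplex ℝ (Fin (n + 1)), X) | ∀ t, s t ∈ (∅ : Set X)} = ∅ :=
    Set.eq_empty_of_forall_notMem fun s hs ↦ hs (Classical.arbitrary _)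
  have : c = 0 := by simpa [chainsIn, hempty] using hc.2
  exact this ▸ zero_mem _

end Functoriality

section Subspace

variable {R : Type*} [CommRing R] {X Y : Type*} [TopologicalSpace X] [TopologicalSpace Y] {n : ℕ}
  {A A' : Set X} {B : Set Y}

/-- The inclusion of a subspace on singular chains. -/
noncomputable def ofSubspace (R : Type*) [CommRing R] (n : ℕ) (A : Set X) :
    SingularChain R n A →ₗ[R] SingularChain R n X :=
  SingularChain.map ((ContinuousMap.id X).restrict A)

lemma ofSubspace_mem (c : SingularChain R n A) : ofSubspace R n A c ∈ chainsIn R A n := by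
  refine linearMap_mem_of_mem_supported (s := Set.univ) _ (fun s _ ↦ ?_) (by simp)
  rw [ofSubspace, map_single]
  exact chainsIn.single_mem fun t ↦ (s t).2

lemma exists_ofSubspace_eq {c : SingularChain R n X} (hc : c ∈ chainsIn R A n) :
    ∃ c', ofSubspace R n A c' = c := by
  refine linearMap_mem_of_mem_supported (s := {s | ∀ t, s t ∈ A})
    (S := LinearMap.range (ofSubspace R n A)) .id
    (fun s hs ↦ ⟨Finsupp.single ⟨fun t ↦ ⟨s t, hs t⟩, by fun_prop⟩ 1, ?_⟩) hc
  exact map_single _ _ _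

lemma ofSubspace_injective : Function.Injective (ofSubspace R n A) :=
  Finsupp.mapDomain_injective fun _ _ hst ↦ ContinuousMap.ext fun x ↦
    Subtype.ext (DFunLike.congr_fun hst x)

lemma ofSubspace_mem_cycles {c : SingularChain R n A} :
    ofSubspace R n A c ∈ cycles R X n ↔ c ∈ cycles R A n := by
  refine ⟨fun h ↦ ?_, map_mem_cycles _⟩
  cases n with
  | zero => exact Submodule.mem_top
  | succ n =>
    rw [mem_cycles_succ, ofSubspace, ← map_boundary] at h
    exact ofSubspace_injective (h.trans (map_zero _).symm)

/-- Both notions of homology of a subset agree. -/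
noncomputable def equiv : ReducedHomology R n A ≃ₗ[R] ReducedHomologyOn R n A := by
  refine .ofBijective (Subquotient.map (C := cycles R A n)
    (C' := cycles R X n ⊓ chainsIn R A n) (ofSubspace R n A)
    (fun c hc ↦ ⟨ofSubspace_mem_cycles.2 hc, ofSubspace_mem c⟩) ?_) ⟨?_, ?_⟩
  · rintro _ ⟨c, rfl⟩
    exact ⟨_, ofSubspace_mem c, (map_boundary _ c).symm⟩
  · refine (injective_iff_map_eq_zero _).2 fun x hx ↦ ?_
    obtain ⟨c, rfl⟩ := mk_surjective x
    obtain ⟨_, he, hec⟩ := mk_eq_zero.1 hx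
    obtain ⟨e, rfl⟩ := exists_ofSubspace_eq he
    exact mk_eq_zero.2 ⟨e, ofSubspace_injective ((map_boundary _ e).trans hec)⟩
  · intro x
    obtain ⟨⟨_, hc, hcA⟩, rfl⟩ := mk_surjective x
    obtain ⟨c, rfl⟩ := exists_ofSubspace_eq hcA
    exact ⟨mk ⟨c, ofSubspace_mem_cycles.1 hc⟩, rfl⟩

lemma equiv_mk (c : cycles R A n) :
    equiv (mk c : ReducedHomology R n A) =
      of (ofSubspace R n A c) (ofSubspace_mem_cycles.2 c.2) (ofSubspace_mem c.1) :=
  rfl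

lemma equiv_map (f : C(X, Y)) (h : Set.MapsTo f A B) (x : ReducedHomology R n A) :
    equiv (ReducedHomology.map ⟨h.restrict, f.continuous.restrict h⟩ x) = map f h (equiv x) := by
  obtain ⟨c, rfl⟩ := mk_surjective x
  rw [ReducedHomology.map_mk, equiv_mk, equiv_mk, map_of]
  simp only [ofSubspace, ← SingularChain.map_comp]
  rfl

lemma equiv_inclusion (h : A ⊆ A') (x : ReducedHomology R n A) :
    equiv (ReducedHomology.map (.inclusion h) x) = incl h (equiv x) := by
  obtain ⟨c, rfl⟩ := mk_surjective x
  rw [ReducedHomology.map_mk, equiv_mk, equiv_mk, incl_of]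
  simp only [ofSubspace, ← SingularChain.map_comp]
  rfl

end Subspace

section HomotopyInvariance

universe u

variable {R : Type u} [CommRing R] {X Y : Type u} [TopologicalSpace X] [TopologicalSpace Y] {n : ℕ}
  {A A' : Set X} {B : Set Y}

lemma subsingleton [Subsingleton (ReducedHomology R n A)] :
    Subsingleton (ReducedHomologyOn R n A) :=
  equiv.symm.toEquiv.subsingleton

lemma incl_eq_zero_of_nullhomotopic (h : A ⊆ A')
    (hnull : (ContinuousMap.inclusion h).Nullhomotopic) (x : ReducedHomologyOn R n A) :
    incl h x = 0 := by
  obtain ⟨x, rfl⟩ := equiv.surjective x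
  rw [← equiv_inclusion, ReducedHomology.map_eq_zero_of_nullhomotopic hnull, LinearMap.zero_apply,
    map_zero]

lemma map_injective_of_homotopyEquiv {Z : Type u} [TopologicalSpace Z]
    (f : C(X, Y)) (h : Set.MapsTo f A B) (v : C(B, Z)) (e : ContinuousMap.HomotopyEquiv A Z)
    (hv : ∀ x : A, v ⟨f x, h x.2⟩ = e x) : Function.Injective (map (R := R) (n := n) f h) := by
  refine (injective_iff_map_eq_zero _).2 fun x hx ↦ ?_
  obtain ⟨x, rfl⟩ := equiv.surjective x
  have hcomp : v.comp ⟨h.restrict, f.continuous.restrict h⟩ = e.toFun := ContinuousMap.ext hv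
  rw [← equiv_map, LinearEquiv.map_eq_zero_iff] at hx
  have : ReducedHomology.congr e x = 0 := by
    change ReducedHomology.map e.toFun x = 0
    rw [← hcomp, ReducedHomology.map_comp, hx, map_zero]
  rw [(LinearEquiv.map_eq_zero_iff _).1 this, map_zero]

end HomotopyInvariance

end ReducedHomologyOn

/-! ### Mayer–Vietoris -/

namespace MayerVietoris

open SingularChain ReducedHomologyOn

section TwoOpens

variable {R : Type*} [CommRing R] {X Y : Type*} [TopologicalSpace X] [TopologicalSpace Y] {n : ℕ}
  {A B : Set X} {A' B' : Set Y}

/-- The cycles of `A ∪ B` with a given splitting into a chain in `A` and a chain in `B`. -/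
noncomputable def splitCycles (R : Type*) [CommRing R] (A B : Set X) (n : ℕ) :
    Submodule R (SingularChain R (n + 1) X × SingularChain R (n + 1) X) :=
  (chainsIn R A (n + 1)).prod (chainsIn R B (n + 1)) ⊓
    LinearMap.ker (boundary ∘ₗ LinearMap.coprod .id .id)

lemma boundary_mem_inter {a b : SingularChain R (n + 1) X} (ha : a ∈ chainsIn R A (n + 1))
    (hb : b ∈ chainsIn R B (n + 1)) (h : boundary a + boundary b = 0) :
    boundary a ∈ chainsIn R (A ∩ B) n := by
  refine chainsIn.inf_eq.le ⟨chainsIn.boundary_mem ha, ?_⟩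
  rw [eq_neg_of_add_eq_zero_left h]
  exact neg_mem (chainsIn.boundary_mem hb)

lemma boundary_add_eq_zero {p : SingularChain R (n + 1) X × SingularChain R (n + 1) X}
    (hp : p ∈ splitCycles R A B n) : boundary p.1 + boundary p.2 = 0 :=
  (map_add boundary p.1 p.2).symm.trans hp.2

/-- The class in `A ∪ B` of a split cycle. -/
noncomputable def total : splitCycles R A B n →ₗ[R] ReducedHomologyOn R (n + 1) (A ∪ B) :=
  Subquotient.mk ∘ₗ (LinearMap.coprod .id .id).restrict (p := splitCycles R A B n)
    (q := cycles R X (n + 1) ⊓ chainsIn R (A ∪ B) (n + 1)) fun _ hp ↦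
      ⟨hp.2, add_mem (chainsIn.mono Set.subset_union_left hp.1.1)
        (chainsIn.mono Set.subset_union_right hp.1.2)⟩

/-- The class in `A ∩ B` of the boundary of the first part of a split cycle. -/
noncomputable def boundaryFst : splitCycles R A B n →ₗ[R] ReducedHomologyOn R n (A ∩ B) :=
  Subquotient.mk ∘ₗ (boundary ∘ₗ LinearMap.fst R _ _).restrict (p := splitCycles R A B n)
    (q := cycles R X n ⊓ chainsIn R (A ∩ B) n) fun p hp ↦
      ⟨boundary_mem_cycles p.1, boundary_mem_inter hp.1.1 hp.1.2 (boundary_add_eq_zero hp)⟩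

lemma total_surjective (hA : IsOpen A) (hB : IsOpen B) :
    Function.Surjective (total : splitCycles R A B n →ₗ[R] _) := by
  intro x
  obtain ⟨c, hc, hcAB, rfl⟩ := exists_of_eq x
  obtain ⟨e, he, hsmall⟩ := exists_sub_boundary_mem_smallChains hA hB hcAB
    (by rw [mem_cycles_succ.1 hc]; exact zero_mem _)
  obtain ⟨a, ha, b, hb, hab⟩ := Submodule.mem_sup.1 hsmall
  have hsplit : (a, b) ∈ splitCycles R A B n := by
    refine ⟨⟨ha, hb⟩, ?_⟩
    change boundary (a + b) = 0
    rw [hab, map_sub, mem_cycles_succ.1 hc, boundary_boundary, sub_zero]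
  refine ⟨⟨(a, b), hsplit⟩, Subquotient.mk_eq_mk.2 ⟨-e, neg_mem he, ?_⟩⟩
  change boundary (-e) = a + b - c
  rw [hab, map_neg]
  abel

lemma exists_of_add_eq_boundary (hA : IsOpen A) (hB : IsOpen B) {a b : SingularChain R n X}
    (ha : a ∈ chainsIn R A n) (hb : b ∈ chainsIn R B n) {e : SingularChain R (n + 1) X}
    (he : e ∈ chainsIn R (A ∪ B) (n + 1)) (hab : boundary e = a + b) :
    ∃ a' ∈ chainsIn R A (n + 1), ∃ b' ∈ chainsIn R B (n + 1),
      boundary a' + boundary b' = a + b ∧ a - boundary a' ∈ chainsIn R (A ∩ B) n := by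
  obtain ⟨e', -, hsmall⟩ := exists_sub_boundary_mem_smallChains hA hB he
    (by rw [hab]; exact Submodule.add_mem_sup ha hb)
  obtain ⟨a', ha', b', hb', hab'⟩ := Submodule.mem_sup.1 hsmall
  have hsum : boundary a' + boundary b' = a + b := by
    rw [← map_add, hab', map_sub, boundary_boundary, hab, sub_zero]
  refine ⟨a', ha', b', hb', hsum, chainsIn.inf_eq.le
    ⟨sub_mem ha (chainsIn.boundary_mem ha'), ?_⟩⟩
  rw [show a - boundary a' = boundary b' - b by rw [sub_eq_sub_iff_add_eq_add, ← hsum, add_comm]]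
  exact sub_mem (chainsIn.boundary_mem hb') hb

lemma ker_total_le (hA : IsOpen A) (hB : IsOpen B) :
    LinearMap.ker (total : splitCycles R A B n →ₗ[R] _) ≤ LinearMap.ker boundaryFst := by
  rintro ⟨⟨a, b⟩, hab⟩ h
  obtain ⟨e, he, heab⟩ := Subquotient.mk_eq_zero.1 h
  obtain ⟨a', -, b', -, -, ha'⟩ := exists_of_add_eq_boundary hA hB hab.1.1 hab.1.2 he heab
  refine Subquotient.mk_eq_zero.2 ⟨a - boundary a', ha', ?_⟩
  rw [map_sub, boundary_boundary, sub_zero]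
  rfl

/-- The linear map `q ∘ p⁻¹`, for `p` surjective with `ker p ≤ ker q`. -/
noncomputable def descend {M N P : Type*} [AddCommGroup M] [Module R M] [AddCommGroup N]
    [Module R N] [AddCommGroup P] [Module R P] (p : M →ₗ[R] N) (q : M →ₗ[R] P)
    (hp : Function.Surjective p) (h : LinearMap.ker p ≤ LinearMap.ker q) : N →ₗ[R] P :=
  (LinearMap.ker p).liftQ q h ∘ₗ (p.quotKerEquivOfSurjective hp).symm

lemma descend_apply {M N P : Type*} [AddCommGroup M] [Module R M] [AddCommGroup N]
    [Module R N] [AddCommGroup P] [Module R P] (p : M →ₗ[R] N) (q : M →ₗ[R] P)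
    (hp : Function.Surjective p) (h : LinearMap.ker p ≤ LinearMap.ker q) (x : M) :
    descend p q hp h (p x) = q x := by
  rw [descend, LinearMap.comp_apply, LinearEquiv.coe_coe,
    p.quotKerEquivOfSurjective_symm_apply hp, Submodule.liftQ_apply]

/-- The connecting homomorphism. -/
noncomputable def δ (hA : IsOpen A) (hB : IsOpen B) :
    ReducedHomologyOn R (n + 1) (A ∪ B) →ₗ[R] ReducedHomologyOn R n (A ∩ B) :=
  descend (M := splitCycles R A B n) total boundaryFst (total_surjective hA hB) (ker_total_le hA hB)

lemma δ_total (hA : IsOpen A) (hB : IsOpen B) (p : splitCycles R A B n) :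
    δ hA hB (total p) = boundaryFst p :=
  descend_apply ..

lemma exists_incl_add_incl_of_δ_eq_zero (hA : IsOpen A) (hB : IsOpen B)
    {x : ReducedHomologyOn R (n + 1) (A ∪ B)} (hx : δ hA hB x = 0) :
    ∃ y z, incl Set.subset_union_left y + incl Set.subset_union_right z = x := by
  obtain ⟨⟨⟨a, b⟩, hab⟩, rfl⟩ := total_surjective hA hB x
  rw [δ_total] at hx
  obtain ⟨w, hw, hwa⟩ := Subquotient.mk_eq_zero.1 hx
  have hwA := chainsIn.inf_eq.ge hw
  have hsum : boundary a + boundary b = 0 := boundary_add_eq_zero hab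
  change boundary w = boundary a at hwa
  refine ⟨of (a - w) (by simp [hwa]) (sub_mem hab.1.1 hwA.1),
    of (b + w) (by simp [hwa, add_comm, hsum]) (add_mem hab.1.2 hwA.2), ?_⟩
  refine congrArg Subquotient.mk (Subtype.ext ?_)
  change a - w + (b + w) = a + b
  abel

lemma exists_δ_eq (hA : IsOpen A) (hB : IsOpen B) {x : ReducedHomologyOn R n (A ∩ B)}
    (hxA : incl Set.inter_subset_left x = 0) (hxB : incl Set.inter_subset_right x = 0) :
    ∃ y, δ hA hB y = x := by
  obtain ⟨c, hc, hcAB, rfl⟩ := exists_of_eq x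
  obtain ⟨a, ha, hac⟩ := Subquotient.mk_eq_zero.1 hxA
  obtain ⟨b, hb, hbc⟩ := Subquotient.mk_eq_zero.1 hxB
  change boundary a = c at hac
  change boundary b = c at hbc
  have hsplit : (a, -b) ∈ splitCycles R A B n := by
    refine ⟨⟨ha, neg_mem hb⟩, ?_⟩
    change boundary (a + -b) = 0
    rw [map_add, map_neg, hac, hbc, add_neg_cancel]
  refine ⟨total ⟨_, hsplit⟩, ?_⟩
  rw [δ_total]
  exact congrArg Subquotient.mk (Subtype.ext hac)

lemma exists_incl_eq_of_incl_add_incl_eq_zero (hA : IsOpen A) (hB : IsOpen B)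
    {x : ReducedHomologyOn R n A} {y : ReducedHomologyOn R n B}
    (h : incl Set.subset_union_left x + incl Set.subset_union_right y = 0) :
    ∃ w : ReducedHomologyOn R n (A ∩ B), incl Set.inter_subset_left w = x := by
  obtain ⟨a, ha, haA, rfl⟩ := exists_of_eq x
  obtain ⟨b, hb, hbB, rfl⟩ := exists_of_eq y
  obtain ⟨e, he, hab⟩ := Subquotient.mk_eq_zero.1 h
  obtain ⟨a', ha', -, -, -, hmem⟩ := exists_of_add_eq_boundary hA hB haA hbB he hab
  refine ⟨of (a - boundary a') (sub_mem ha (boundary_mem_cycles a')) hmem, ?_⟩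
  refine Subquotient.mk_eq_mk.2 ⟨-a', neg_mem ha', ?_⟩
  change boundary (-a') = a - boundary a' - a
  rw [map_neg]
  abel

lemma map_δ {hA : IsOpen A} {hB : IsOpen B} (hA' : IsOpen A') (hB' : IsOpen B') (f : C(X, Y))
    (hfA : Set.MapsTo f A A') (hfB : Set.MapsTo f B B')
    (x : ReducedHomologyOn R (n + 1) (A ∪ B)) :
    map f (hfA.inter_inter hfB) (δ hA hB x) = δ hA' hB' (map f (hfA.union_union hfB) x) := by
  obtain ⟨⟨⟨a, b⟩, hab⟩, rfl⟩ := total_surjective hA hB x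
  have hsplit : (SingularChain.map f a, SingularChain.map f b) ∈ splitCycles R A' B' n := by
    refine ⟨⟨chainsIn.map_mem hfA hab.1.1, chainsIn.map_mem hfB hab.1.2⟩, ?_⟩
    change boundary (SingularChain.map f a + SingularChain.map f b) = 0
    rw [← map_add, ← map_boundary, map_add, boundary_add_eq_zero hab, map_zero]
  have htotal : map f (hfA.union_union hfB) (total ⟨(a, b), hab⟩) = total ⟨_, hsplit⟩ :=
    congrArg Subquotient.mk (Subtype.ext (map_add (SingularChain.map f) a b))
  rw [htotal, δ_total, δ_total]
  exact congrArg Subquotient.mk (Subtype.ext (map_boundary f a))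

lemma δ_injective (hA : IsOpen A) (hB : IsOpen B) [Subsingleton (ReducedHomologyOn R (n + 1) A)]
    [Subsingleton (ReducedHomologyOn R (n + 1) B)] :
    Function.Injective (δ hA hB : ReducedHomologyOn R (n + 1) (A ∪ B) →ₗ[R] _) := by
  refine (injective_iff_map_eq_zero _).2 fun x hx ↦ ?_
  obtain ⟨y, z, rfl⟩ := exists_incl_add_incl_of_δ_eq_zero hA hB hx
  rw [Subsingleton.elim y 0, Subsingleton.elim z 0, map_zero, map_zero, add_zero]

/-- The suspension isomorphism for two acyclic open sets. -/
noncomputable def suspensionEquiv (hA : IsOpen A) (hB : IsOpen B)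
    [∀ n, Subsingleton (ReducedHomologyOn R n A)] [∀ n, Subsingleton (ReducedHomologyOn R n B)] :
    ReducedHomologyOn R (n + 1) (A ∪ B) ≃ₗ[R] ReducedHomologyOn R n (A ∩ B) :=
  .ofBijective (δ hA hB) ⟨δ_injective hA hB, fun _ ↦
    exists_δ_eq hA hB (Subsingleton.elim _ _) (Subsingleton.elim _ _)⟩

lemma incl_surjective (hA : IsOpen A) (hB : IsOpen B)
    [Subsingleton (ReducedHomologyOn R (n + 1) B)] [Subsingleton (ReducedHomologyOn R n (A ∩ B))] :
    Function.Surjective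
      (incl (R := R) (n := n + 1) (Set.subset_union_left : A ⊆ A ∪ B)) := by
  intro x
  obtain ⟨y, z, rfl⟩ := exists_incl_add_incl_of_δ_eq_zero hA hB (x := x) (Subsingleton.elim _ _)
  exact ⟨y, by rw [Subsingleton.elim z 0, map_zero, add_zero]⟩

lemma incl_injective (hA : IsOpen A) (hB : IsOpen B)
    [Subsingleton (ReducedHomologyOn R n (A ∩ B))] :
    Function.Injective (incl (R := R) (n := n) (Set.subset_union_left : A ⊆ A ∪ B)) := by
  refine (injective_iff_map_eq_zero _).2 fun x hx ↦ ?_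
  obtain ⟨w, rfl⟩ := exists_incl_eq_of_incl_add_incl_eq_zero hA hB (y := 0)
    (by rw [hx, map_zero, add_zero])
  rw [Subsingleton.elim w 0, map_zero]

end TwoOpens

section Filtration

variable {R : Type*} [CommRing R] {X : Type*} [TopologicalSpace X] {n : ℕ} {U : ℕ → Set X}

lemma incl_biUnion_surjective (hU : ∀ i, IsOpen (U i)) {k m : ℕ} (hkm : k ≤ m)
    (hacyclic : ∀ i, k ≤ i → Subsingleton (ReducedHomologyOn R (n + 1) (U i)))
    (hinter : ∀ i, k ≤ i → Subsingleton (ReducedHomologyOn R n ((⋃ j < i, U j) ∩ U i)))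
    {A B : Set X} (hA : A = ⋃ i < k, U i) (hB : B = ⋃ i < m, U i) (h : A ⊆ B) :
    Function.Surjective (incl (R := R) (n := n + 1) h) := by
  subst hA hB
  induction m, hkm using Nat.le_induction with
  | base => exact fun x ↦ ⟨x, incl_self h x⟩
  | succ m hkm ih =>
    have := hacyclic m hkm
    have := hinter m hkm
    have hm : ⋃ i < k, U i ⊆ ⋃ i < m, U i :=
      Set.biUnion_mono (fun _ hi ↦ lt_of_lt_of_le hi hkm) fun _ _ ↦ subset_rfl
    have hopen : IsOpen (⋃ i < m, U i) := isOpen_biUnion fun i _ ↦ hU i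
    revert h
    rw [Set.biUnion_lt_succ]
    intro h x
    obtain ⟨y, rfl⟩ := incl_surjective hopen (hU m) x
    obtain ⟨z, rfl⟩ := ih hm y
    exact ⟨z, (incl_incl ..).symm⟩

lemma incl_biUnion_injective (hU : ∀ i, IsOpen (U i)) {k m : ℕ} (hkm : k ≤ m)
    (hinter : ∀ i, k ≤ i → i < m →
      Subsingleton (ReducedHomologyOn R n ((⋃ j < i, U j) ∩ U i)))
    {A B : Set X} (hA : A = ⋃ i < k, U i) (hB : B = ⋃ i < m, U i) (h : A ⊆ B) :
    Function.Injective (incl (R := R) (n := n) h) := by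
  subst hA hB
  induction m, hkm using Nat.le_induction with
  | base => exact fun x y hxy ↦ by rwa [incl_self, incl_self] at hxy
  | succ m hkm ih =>
    have := hinter m hkm m.lt_succ_self
    have hm : ⋃ i < k, U i ⊆ ⋃ i < m, U i :=
      Set.biUnion_mono (fun _ hi ↦ lt_of_lt_of_le hi hkm) fun _ _ ↦ subset_rfl
    have hopen : IsOpen (⋃ i < m, U i) := isOpen_biUnion fun i _ ↦ hU i
    revert h
    rw [Set.biUnion_lt_succ]
    intro h x y hxy
    rw [← incl_incl hm Set.subset_union_left, ← incl_incl hm Set.subset_union_left] at hxy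
    exact ih (fun i hki him ↦ hinter i hki (Nat.lt_succ_of_lt him)) hm
      (incl_injective hopen (hU m) hxy)

lemma incl_biUnion_eq_zero (hU : ∀ i, IsOpen (U i)) {W : Set X} {m : ℕ}
    (hinter : ∀ i < m, Subsingleton (ReducedHomologyOn R n ((⋃ j < i, U j) ∩ U i)))
    (hzero : ∀ i < m, ∀ (h : U i ⊆ W) (x : ReducedHomologyOn R (n + 1) (U i)), incl h x = 0)
    (h : ⋃ i < m, U i ⊆ W) (x : ReducedHomologyOn R (n + 1) (⋃ i < m, U i)) :
    incl h x = 0 := by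
  induction m with
  | zero =>
    have : ⋃ i < 0, U i = ∅ := by simp
    rw [← incl_incl this.le (Set.empty_subset W), Subsingleton.elim (incl _ x) 0, map_zero]
  | succ m ih =>
    have := hinter m m.lt_succ_self
    have hopen : IsOpen (⋃ i < m, U i) := isOpen_biUnion fun i _ ↦ hU i
    revert h x
    rw [Set.biUnion_lt_succ]
    intro h x
    obtain ⟨y, z, rfl⟩ := exists_incl_add_incl_of_δ_eq_zero
      hopen (hU m) (x := x) (Subsingleton.elim _ _)
    rw [map_add, incl_incl, incl_incl, hzero m m.lt_succ_self, add_zero]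
    exact ih (fun i hi ↦ hinter i (Nat.lt_succ_of_lt hi))
      (fun i hi ↦ hzero i (Nat.lt_succ_of_lt hi)) _ y

end Filtration

end MayerVietoris

section PuncturedSpace

open ReducedHomologyOn

universe u

variable (E : Type u) [NormedAddCommGroup E]

/-- The complement of the ray `{(0, s) | s ≤ 0}` in `E × ℝ`. -/
def upperCone : Set (E × ℝ) := {p | p.1 ≠ 0 ∨ 0 < p.2}

/-- The complement of the ray `{(0, s) | 0 ≤ s}` in `E × ℝ`. -/
def lowerCone : Set (E × ℝ) := {p | p.1 ≠ 0 ∨ p.2 < 0}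

lemma isOpen_upperCone : IsOpen (upperCone E) :=
  (isOpen_ne.preimage continuous_fst).union (isOpen_Ioi.preimage continuous_snd)

lemma isOpen_lowerCone : IsOpen (lowerCone E) :=
  (isOpen_ne.preimage continuous_fst).union (isOpen_Iio.preimage continuous_snd)

lemma upperCone_union_lowerCone : upperCone E ∪ lowerCone E = {0}ᶜ := by
  ext ⟨x, s⟩
  simp only [upperCone, lowerCone, Set.mem_union, Set.mem_ofPred_eq, Set.mem_compl_iff,
    Set.mem_singleton_iff, Prod.mk_eq_zero]
  grind

lemma upperCone_inter_lowerCone : upperCone E ∩ lowerCone E = {0}ᶜ ×ˢ Set.univ := by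
  ext ⟨x, s⟩
  simp only [upperCone, lowerCone, Set.mem_inter_iff, Set.mem_ofPred_eq, Set.mem_prod,
    Set.mem_compl_iff, Set.mem_singleton_iff, Set.mem_univ]
  grind

variable [NormedSpace ℝ E]

lemma starConvex_upperCone : StarConvex ℝ (0, 1) (upperCone E) := by
  rintro ⟨x, s⟩ hxs a b ha hb hab
  rcases hb.eq_or_lt with rfl | hb
  · obtain rfl : a = 1 := by simpa using hab
    simp [upperCone]
  · refine hxs.imp (fun hx ↦ ?_) fun hs ↦ ?_
    · simpa using ⟨hb.ne', hx⟩
    · simp only [Prod.snd_add, Prod.smul_snd, smul_eq_mul, mul_one] at hs ⊢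
      positivity

lemma starConvex_lowerCone : StarConvex ℝ (0, -1) (lowerCone E) := by
  rintro ⟨x, s⟩ hxs a b ha hb hab
  rcases hb.eq_or_lt with rfl | hb
  · obtain rfl : a = 1 := by simpa using hab
    simp [lowerCone]
  · refine hxs.imp (fun hx ↦ ?_) fun hs ↦ ?_
    · simpa using ⟨hb.ne', hx⟩
    · simp only [Prod.snd_add, Prod.smul_snd, smul_eq_mul] at hs ⊢
      nlinarith

variable (R : Type u) [CommRing R] (n : ℕ)

instance subsingleton_upperCone : Subsingleton (ReducedHomologyOn R n (upperCone E)) :=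
  have := (starConvex_upperCone E).contractibleSpace ⟨(0, 1), by simp [upperCone]⟩
  have := ReducedHomology.subsingleton_of_contractible (R := R) (n := n) (X := upperCone E)
  subsingleton

instance subsingleton_lowerCone : Subsingleton (ReducedHomologyOn R n (lowerCone E)) :=
  have := (starConvex_lowerCone E).contractibleSpace ⟨(0, -1), by simp [lowerCone]⟩
  have := ReducedHomology.subsingleton_of_contractible (R := R) (n := n) (X := lowerCone E)
  subsingleton

/-- A contractible factor can be dropped up to homotopy. -/
noncomputable def prodContractible (X Y : Type*) [TopologicalSpace X] [TopologicalSpace Y]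
    [ContractibleSpace Y] : ContinuousMap.HomotopyEquiv (X × Y) X :=
  ((ContinuousMap.HomotopyEquiv.refl X).prodCongr
    (ContractibleSpace.hequiv_unit Y).some).trans (Homeomorph.prodPUnit X).toHomotopyEquiv

/-- Removing the origin from `E × ℝ` gives the suspension of `E` without the origin. -/
noncomputable def puncturedSuspensionEquiv :
    ReducedHomology R (n + 1) ({0}ᶜ : Set (E × ℝ)) ≃ₗ[R] ReducedHomology R n ({0}ᶜ : Set E) :=
  ReducedHomology.congr
    (Homeomorph.setCongr (upperCone_union_lowerCone E).symm).toHomotopyEquiv ≪≫ₗ equiv ≪≫ₗ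
  MayerVietoris.suspensionEquiv (isOpen_upperCone E) (isOpen_lowerCone E) ≪≫ₗ
  equiv.symm ≪≫ₗ
  ReducedHomology.congr ((Homeomorph.setCongr (upperCone_inter_lowerCone E)).trans
    ((Homeomorph.Set.prod _ _).trans ((Homeomorph.refl _).prodCongr
      (Homeomorph.Set.univ ℝ)))).toHomotopyEquiv ≪≫ₗ
  ReducedHomology.congr (prodContractible _ _)

variable {E}

/-- The restriction of a linear isomorphism to the complements of the origins. -/
def puncturedHomeomorph {F : Type*} [NormedAddCommGroup F] [NormedSpace ℝ F] (e : E ≃L[ℝ] F) :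
    ({0}ᶜ : Set E) ≃ₜ ({0}ᶜ : Set F) :=
  e.toHomeomorph.subtype fun x ↦ by simp

variable [FiniteDimensional ℝ E]

lemma exists_puncturedSuspensionEquiv {m : ℕ} (hm : Module.finrank ℝ E = m + 1) :
    ∃ (F : Type u) (_ : NormedAddCommGroup F) (_ : NormedSpace ℝ F) (_ : FiniteDimensional ℝ F),
      Module.finrank ℝ F = m ∧ Nonempty
        (ReducedHomology R (n + 1) ({0}ᶜ : Set E) ≃ₗ[R] ReducedHomology R n ({0}ᶜ : Set F)) := by
  have e : E ≃L[ℝ] ULift.{u} (Fin m → ℝ) × ℝ := .ofFinrankEq (by simp [hm])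
  exact ⟨ULift.{u} (Fin m → ℝ), inferInstance, inferInstance, inferInstance, by simp,
    ⟨ReducedHomology.congr (puncturedHomeomorph e).toHomotopyEquiv ≪≫ₗ
      puncturedSuspensionEquiv _ R n⟩⟩

lemma nonempty_linearEquiv_punctured :
    Nonempty (ReducedHomology R (Module.finrank ℝ E) ({0}ᶜ : Set E) ≃ₗ[R] R) := by
  generalize hm : Module.finrank ℝ E = m
  induction m generalizing E with
  | zero =>
    have := Module.finrank_zero_iff.1 hm
    have : IsEmpty ({0}ᶜ : Set E) := ⟨fun x ↦ x.2 (Subsingleton.elim _ _)⟩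
    exact ReducedHomology.nonempty_linearEquiv_of_isEmpty
  | succ m ih =>
    obtain ⟨F, _, _, _, hF, ⟨e⟩⟩ := exists_puncturedSuspensionEquiv (R := R) (n := m) hm
    exact (ih hF).map e.trans

lemma subsingleton_punctured {n : ℕ} (hn : n < Module.finrank ℝ E) :
    Subsingleton (ReducedHomology R n ({0}ᶜ : Set E)) := by
  generalize hm : Module.finrank ℝ E = m at hn
  induction n generalizing E m with
  | zero =>
    have := Module.nontrivial_of_finrank_pos (hm ▸ hn)
    obtain ⟨x, hx⟩ := exists_ne (0 : E)
    have : Nonempty ({0}ᶜ : Set E) := ⟨⟨x, hx⟩⟩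
    infer_instance
  | succ n ih =>
    obtain ⟨m, rfl⟩ := Nat.exists_eq_add_one.2 (Nat.zero_lt_of_lt hn)
    obtain ⟨F, _, _, _, hF, ⟨e⟩⟩ := exists_puncturedSuspensionEquiv (R := R) (n := n) hm
    have := ih m hF (Nat.succ_lt_succ_iff.1 hn)
    exact e.toEquiv.subsingleton

end PuncturedSpace

/-! ### Cycles on projective space -/

section OpenQuotient

variable {X Y Z : Type*} [TopologicalSpace X] [TopologicalSpace Y] [TopologicalSpace Z] {q : X → Y}

lemma isOpenQuotientMap_of_orbits (hq : Topology.IsQuotientMap q) {G : Type*} (σ : G → C(X, X))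
    (horbit : ∀ x y, q x = q y ↔ ∃ g, σ g x = y) : IsOpenQuotientMap q := by
  refine ⟨hq.surjective, hq.continuous, fun U hU ↦ ?_⟩
  have hpreimage : q ⁻¹' (q '' U) = ⋃ g, σ g ⁻¹' U := by
    ext x
    simp only [Set.mem_preimage, Set.mem_image, Set.mem_iUnion]
    constructor
    · rintro ⟨y, hy, hyx⟩
      obtain ⟨g, rfl⟩ := (horbit x y).1 hyx.symm
      exact ⟨g, hy⟩
    · rintro ⟨g, hg⟩
      exact ⟨σ g x, hg, ((horbit x _).2 ⟨g, rfl⟩).symm⟩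
  rw [← hq.isOpen_preimage, hpreimage]
  exact isOpen_iUnion fun g ↦ hU.preimage (σ g).continuous

/-- The map induced on a quotient by a map that is constant on the fibres. -/
noncomputable def quotientLift (hq : IsOpenQuotientMap q) (F : C(X, Z))
    (hF : ∀ x y, q x = q y → F x = F y) : C(Y, Z) :=
  Topology.IsQuotientMap.lift (f := ⟨q, hq.continuous⟩) hq.isQuotientMap F fun _ _ ↦ hF _ _

lemma quotientLift_apply (hq : IsOpenQuotientMap q) (F : C(X, Z))
    (hF : ∀ x y, q x = q y → F x = F y) (x : X) : quotientLift hq F hF (q x) = F x :=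
  DFunLike.congr_fun (Topology.IsQuotientMap.lift_comp (f := ⟨q, hq.continuous⟩)
    hq.isQuotientMap F fun _ _ ↦ hF _ _) x

lemma homotopic_of_quotient (hq : IsOpenQuotientMap q) {f g : C(Y, Z)} (F : C(unitInterval × X, Z))
    (hF : ∀ t x y, q x = q y → F (t, x) = F (t, y)) (hf : ∀ x, F (0, x) = f (q x))
    (hg : ∀ x, F (1, x) = g (q x)) : f.Homotopic g := by
  have hQ : IsOpenQuotientMap (Prod.map id q : unitInterval × X → unitInterval × Y) :=
    .prodMap .id hq
  have hFQ (p p' : unitInterval × X) (hpp' : Prod.map id q p = Prod.map id q p') : F p = F p' := by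
    obtain ⟨t, x⟩ := p
    obtain ⟨t', x'⟩ := p'
    obtain ⟨rfl, hxx'⟩ := Prod.ext_iff.1 hpp'
    exact hF t x x' hxx'
  refine ⟨⟨quotientLift hQ F hFQ, fun y ↦ ?_, fun y ↦ ?_⟩⟩ <;>
    obtain ⟨x, rfl⟩ := hq.surjective y
  · exact (quotientLift_apply hQ F hFQ (0, x)).trans (hf x)
  · exact (quotientLift_apply hQ F hFQ (1, x)).trans (hg x)

end OpenQuotient

namespace CP

/-- Homogeneous coordinates of points of `ℂPⁿ`. -/
abbrev Coordinates (n : ℕ) := {v : Fin (n + 1) → ℂ // v ≠ 0}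

variable {n : ℕ}

/-- The point of `ℂPⁿ` with given homogeneous coordinates. -/
noncomputable def mk (v : Coordinates n) : CP n :=
  Quotient.mk (projectivizationSetoid ℂ (Fin (n + 1) → ℂ)) v

lemma mk_eq_mk {v w : Coordinates n} :
    mk v = mk w ↔ ∃ c : ℂˣ, c • v.1 = w.1 := by
  rw [eq_comm]
  exact Quotient.eq

lemma isOpenQuotientMap_mk : IsOpenQuotientMap (mk (n := n)) := by
  refine isOpenQuotientMap_of_orbits isQuotientMap_quotient_mk'
    (fun c : ℂˣ ↦ ⟨fun v ↦ ⟨c • v.1, (smul_ne_zero_iff_ne c).2 v.2⟩, by fun_prop⟩) fun v w ↦ ?_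
  simp only [ContinuousMap.coe_mk, Subtype.ext_iff, mk_eq_mk]

end CP

namespace SP

/-- The unordered tuple underlying an ordered one. -/
def mk {X : Type} [TopologicalSpace X] {d : ℕ} (x : Fin d → X) : SP X d :=
  Quotient.mk (SPSetoid X d) x

lemma mk_eq_mk {X : Type} [TopologicalSpace X] {d : ℕ} {x y : Fin d → X} :
    mk x = mk y ↔ ∃ σ : Equiv.Perm (Fin d), x ∘ σ = y :=
  Quotient.eq

lemma isOpenQuotientMap_mk {X : Type} [TopologicalSpace X] {d : ℕ} :
    IsOpenQuotientMap (mk : (Fin d → X) → SP X d) :=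
  isOpenQuotientMap_of_orbits isQuotientMap_quotient_mk'
    (fun σ : Equiv.Perm (Fin d) ↦ ⟨fun x ↦ x ∘ σ, by fun_prop⟩) fun _ _ ↦ mk_eq_mk

variable {d n : ℕ}

/-- The effective `0`-cycle whose points have given homogeneous coordinates. -/
noncomputable def cycle (x : Fin d → CP.Coordinates n) : SP (CP n) d :=
  mk fun a ↦ CP.mk (x a)

lemma isOpenQuotientMap_cycle : IsOpenQuotientMap (cycle (d := d) (n := n)) :=
  isOpenQuotientMap_mk.comp (.piMap fun _ ↦ CP.isOpenQuotientMap_mk)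

lemma cycle_eq_cycle {x y : Fin d → CP.Coordinates n} :
    cycle x = cycle y ↔
      ∃ (σ : Equiv.Perm (Fin d)) (c : Fin d → ℂˣ), ∀ a, c a • (x (σ a)).1 = (y a).1 := by
  simp only [cycle, mk_eq_mk, funext_iff, Function.comp_apply, CP.mk_eq_mk, Classical.skolem]

end SP

section Vieta

open Polynomial

variable {d : ℕ}

/-- The monic polynomial with roots `-w a`; the sign makes its constant coefficient `∏ a, w a`. -/
noncomputable def vietaPoly (w : Fin d → ℂ) : ℂ[X] := ∏ a, (X + C (w a))

/-- Viète's map from roots to coefficients. -/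
noncomputable def vieta (w : Fin d → ℂ) : Fin d → ℂ := fun i ↦ (vietaPoly w).coeff i

lemma vietaPoly_monic (w : Fin d → ℂ) : (vietaPoly w).Monic :=
  monic_prod_of_monic _ _ fun _ _ ↦ monic_X_add_C _

lemma natDegree_vietaPoly (w : Fin d → ℂ) : (vietaPoly w).natDegree = d := by
  simp [vietaPoly, natDegree_prod_of_monic _ _ fun a _ ↦ monic_X_add_C (w a)]

lemma roots_vietaPoly (w : Fin d → ℂ) :
    (vietaPoly w).roots = Finset.univ.val.map fun a ↦ -w a := by
  rw [vietaPoly, roots_prod _ _ (vietaPoly_monic w).ne_zero]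
  simp [Multiset.bind_singleton]

lemma vieta_zero [NeZero d] (w : Fin d → ℂ) : vieta w 0 = ∏ a, w a := by
  simp [vieta, vietaPoly, coeff_zero_eq_eval_zero, eval_prod]

lemma vieta_zero_ne_zero [NeZero d] {w : Fin d → ℂ} : vieta w 0 ≠ 0 ↔ ∀ a, w a ≠ 0 := by
  simp [vieta_zero, Finset.prod_ne_zero_iff]

lemma exists_comp_perm_eq_of_map_univ_eq {ι α : Type*} [Fintype ι] {f g : ι → α}
    (h : Finset.univ.val.map f = Finset.univ.val.map g) : ∃ σ : Equiv.Perm ι, f ∘ σ = g := by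
  classical
  have hfiber (c : α) : Nonempty ({a // g a = c} ≃ {a // f a = c}) := by
    have hcount := congrArg (Multiset.count c) h
    rw [Multiset.count_map, Multiset.count_map] at hcount
    refine ⟨Fintype.equivOfCardEq ?_⟩
    rw [Fintype.card_subtype, Fintype.card_subtype]
    simp only [eq_comm (a := c)] at hcount
    exact hcount.symm
  exact ⟨.ofFiberEquiv fun c ↦ (hfiber c).some, funext (Equiv.ofFiberEquiv_map _)⟩

lemma vieta_eq_vieta {w w' : Fin d → ℂ} :
    vieta w = vieta w' ↔ ∃ σ : Equiv.Perm (Fin d), w ∘ σ = w' := by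
  constructor
  · intro h
    have hpoly : vietaPoly w = vietaPoly w' := by
      rw [(vietaPoly_monic w).as_sum, (vietaPoly_monic w').as_sum, natDegree_vietaPoly,
        natDegree_vietaPoly]
      congr 1
      exact Finset.sum_congr rfl fun i hi ↦
        congrArg (C · * X ^ i) (congrFun h ⟨i, Finset.mem_range.1 hi⟩)
    obtain ⟨σ, hσ⟩ := exists_comp_perm_eq_of_map_univ_eq
      ((roots_vietaPoly w).symm.trans ((congrArg roots hpoly).trans (roots_vietaPoly w')))
    exact ⟨σ, funext fun a ↦ neg_injective (congrFun hσ a)⟩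
  · rintro ⟨σ, rfl⟩
    have hpoly : vietaPoly (w ∘ σ) = vietaPoly w := Equiv.prod_comp σ fun a ↦ X + C (w a)
    unfold vieta
    rw [hpoly]

lemma exists_vietaPoly_eq {p : ℂ[X]} (hp : p.Monic) (hd : p.natDegree = d) :
    ∃ w : Fin d → ℂ, vietaPoly w = p := by
  obtain ⟨l, hl⟩ : ∃ l : List ℂ, (l : Multiset ℂ) = p.roots := Quotient.exists_rep p.roots
  have hsplits := IsAlgClosed.splits p
  have hcard : l.length = d := by
    rw [← hd, hsplits.natDegree_eq_card_roots, ← hl, Multiset.coe_card]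
  subst hcard
  refine ⟨fun a ↦ -l[a], ?_⟩
  calc vietaPoly (fun a : Fin l.length ↦ -l[a])
      = ∏ a : Fin l.length, (X - C l[a]) := by simp only [vietaPoly, map_neg, ← sub_eq_add_neg]
    _ = (p.roots.map fun r ↦ X - C r).prod := by
      rw [← hl, Multiset.map_coe, Multiset.prod_coe]
      exact Fin.prod_univ_fun_getElem l fun r ↦ X - C r
    _ = p := by simpa [hp.leadingCoeff] using hsplits.eq_prod_roots.symm

lemma vieta_surjective : Function.Surjective (vieta (d := d)) := by
  intro c
  have hdeg : (∑ i : Fin d, C (c i) * X ^ (i : ℕ)).degree < (d : WithBot ℕ) :=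
    degree_sum_fin_lt c
  have hnatDegree : (X ^ d + ∑ i : Fin d, C (c i) * X ^ (i : ℕ)).natDegree = d :=
    natDegree_eq_of_degree_eq_some
      ((degree_add_eq_left_of_degree_lt (by rwa [degree_X_pow])).trans (degree_X_pow d))
  obtain ⟨w, hw⟩ := exists_vietaPoly_eq (monic_X_pow_add hdeg) hnatDegree
  refine ⟨w, funext fun i ↦ ?_⟩
  simp [vieta, hw, finsetSum_coeff, coeff_X_pow, Fin.val_inj, i.2.ne]

lemma continuous_vieta : Continuous (vieta (d := d)) := by
  refine continuous_pi fun i ↦ ?_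
  have hi : (i : ℕ) ≤ (Finset.univ : Finset (Fin d)).card := by simp
  simp only [vieta, vietaPoly, Finset.prod_X_add_C_coeff Finset.univ _ hi]
  fun_prop

lemma norm_le_norm_vieta_add_one (w : Fin d → ℂ) : ‖w‖ ≤ ‖vieta w‖ + 1 := by
  have hbound : (vietaPoly w).cauchyBound ≤ ‖vieta w‖₊ + 1 := by
    rw [cauchyBound, (vietaPoly_monic w).leadingCoeff, nnnorm_one, div_one, natDegree_vietaPoly]
    gcongr
    exact Finset.sup_le fun i hi ↦ nnnorm_le_pi_nnnorm (vieta w) ⟨i, Finset.mem_range.1 hi⟩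
  refine (pi_norm_le_iff_of_nonneg (by positivity)).2 fun a ↦ ?_
  have hroot : (vietaPoly w).IsRoot (-w a) := by
    rw [← mem_roots (vietaPoly_monic w).ne_zero, roots_vietaPoly]
    exact Multiset.mem_map_of_mem _ (Finset.mem_univ a)
  rw [← norm_neg]
  exact_mod_cast (hroot.norm_lt_cauchyBound (vietaPoly_monic w).ne_zero).le.trans hbound

lemma isProperMap_vieta : IsProperMap (vieta (d := d)) := by
  rw [isProperMap_iff_tendsto_cocompact, ← Metric.cobounded_eq_cocompact,
    ← tendsto_norm_atTop_iff_cobounded]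
  exact ⟨continuous_vieta, Filter.tendsto_atTop_mono
    (fun w ↦ sub_le_iff_le_add.2 (norm_le_norm_vieta_add_one w))
    (Filter.tendsto_atTop_add_const_right _ (-1) tendsto_norm_cobounded_atTop)⟩

lemma isOpenQuotientMap_vieta : IsOpenQuotientMap (vieta (d := d)) :=
  isOpenQuotientMap_of_orbits
    (isProperMap_vieta.isClosedMap.isQuotientMap continuous_vieta vieta_surjective)
    (fun σ : Equiv.Perm (Fin d) ↦ ⟨fun w ↦ w ∘ σ, by fun_prop⟩) fun _ _ ↦ vieta_eq_vieta

end Vieta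

section NonvanishingForm

variable {E : Type*} [AddCommGroup E] [Module ℂ E] [TopologicalSpace E] [IsTopologicalAddGroup E]
  [ContinuousSMul ℂ E]

/-- The complement of the hyperplane `φ = 0` deformation retracts onto a punctured line. -/
noncomputable def nonvanishingEquiv (φ : E →L[ℂ] ℂ) {e : E} (he : φ e = 1) :
    {v : E | φ v ≠ 0} ≃ₕ ({0}ᶜ : Set ℂ) where
  toFun := ⟨fun v ↦ ⟨φ v, v.2⟩, by fun_prop⟩
  invFun := ⟨fun z ↦ ⟨z.1 • e, by simpa [he] using Set.mem_compl_singleton_iff.1 z.2⟩, by fun_prop⟩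
  left_inv :=
    ⟨{  toFun p := ⟨((1 - p.1 : ℝ) : ℂ) • φ p.2 • e + ((p.1 : ℝ) : ℂ) • p.2.1, by
          have hφ : φ (((1 - p.1 : ℝ) : ℂ) • φ p.2 • e + ((p.1 : ℝ) : ℂ) • p.2.1) = φ p.2 := by
            simp only [map_add, map_smul, he, smul_eq_mul]
            push_cast
            ring
          simpa only [Set.mem_ofPred_eq, hφ] using p.2.2⟩
        continuous_toFun := by fun_prop
        map_zero_left v := Subtype.ext (by simp)
        map_one_left v := Subtype.ext (by simp) }⟩
  right_inv := by
    convert ContinuousMap.Homotopic.refl _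
    ext z
    simp [he]

end NonvanishingForm

namespace SP

open CP

section Avoiding

variable {d n : ℕ}

/-- The cycles none of whose points lies on the hyperplane `φ = 0`. -/
def avoiding (φ : Module.Dual ℂ (Fin (n + 1) → ℂ)) : Set (SP (CP n) d) :=
  cycle '' {x | ∀ a, φ (x a) ≠ 0}

variable {φ ψ χ : Module.Dual ℂ (Fin (n + 1) → ℂ)}

@[simp]
lemma cycle_mem_avoiding {x : Fin d → Coordinates n} :
    cycle x ∈ avoiding φ ↔ ∀ a, φ (x a) ≠ 0 := by
  refine ⟨?_, fun hx ↦ ⟨x, hx, rfl⟩⟩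
  rintro ⟨y, hy, hyx⟩ a
  obtain ⟨σ, c, hc⟩ := cycle_eq_cycle.1 hyx
  rw [← hc, Units.smul_def, map_smul]
  exact smul_ne_zero (c a).ne_zero (hy (σ a))

lemma isOpen_avoiding : IsOpen (avoiding φ : Set (SP (CP n) d)) := by
  have hφ := φ.continuous_of_finiteDimensional
  refine isOpenQuotientMap_cycle.isOpenMap _ ?_
  simp only [Set.ofPred_forall]
  exact isOpen_iInter_of_finite fun a ↦ isOpen_ne.preimage (by fun_prop)

lemma ne_zero_of_map_ne_zero {v : Fin (n + 1) → ℂ} (hv : φ v ≠ 0) : v ≠ 0 :=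
  fun h ↦ hv (by rw [h, map_zero])

lemma homotopic_id_of_section {E : Type*} [AddCommGroup E] [Module ℂ E]
    {Q : (Fin (n + 1) → ℂ) →ₗ[ℂ] E} {L : E →ₗ[ℂ] Fin (n + 1) → ℂ} (hL : ∀ p, Q (L p) = p)
    {S : Set (SP (CP n) d)} (hne : ∀ x, cycle x ∈ S → ∀ a, Q (x a) ≠ 0)
    (hS : ∀ x y, cycle x ∈ S → (∀ a, Q (y a) = Q (x a)) → cycle y ∈ S) (f : C(S, S))
    (hf : ∀ (x : Fin d → Coordinates n) (hx : cycle x ∈ S) (y : Fin d → Coordinates n),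
      (∀ a, (y a).1 = L (Q (x a))) → (f ⟨cycle x, hx⟩).1 = cycle y) :
    f.Homotopic (.id S) := by
  let move (t : ℝ) (v : Fin (n + 1) → ℂ) : Fin (n + 1) → ℂ :=
    ((1 - t : ℝ) : ℂ) • L (Q v) + (t : ℂ) • v
  have hmove (t : ℝ) (v : Fin (n + 1) → ℂ) : Q (move t v) = Q v := by
    simp only [move, map_add, map_smul, hL, ← add_smul]
    simp
  have hmove₀ (t : ℝ) (x : Fin d → Coordinates n) (hx : cycle x ∈ S) (a : Fin d) :
      move t (x a) ≠ 0 := by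
    intro h
    exact hne x hx a (by rw [← hmove t, h, map_zero])
  have hLQ := (L ∘ₗ Q).continuous_of_finiteDimensional
  have hcoord (a : Fin d) : Continuous fun p : unitInterval × (cycle ⁻¹' S) ↦ (p.2.1 a).1 :=
    continuous_subtype_val.comp
      ((continuous_apply a).comp (continuous_subtype_val.comp continuous_snd))
  let F : C(unitInterval × (cycle ⁻¹' S), Fin d → Coordinates n) :=
    ⟨fun p a ↦ ⟨move p.1 (p.2.1 a), hmove₀ p.1 p.2.1 p.2.2 a⟩,
      continuous_pi fun a ↦ .subtype_mk
        ((by fun_prop : Continuous fun p : unitInterval × (cycle ⁻¹' S) ↦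
          ((1 - p.1.1 : ℝ) : ℂ) • (L ∘ₗ Q) (p.2.1 a) + ((p.1.1 : ℝ) : ℂ) • (p.2.1 a).1)) _⟩
  have hF (p) : cycle (F p) ∈ S := hS p.2.1 _ p.2.2 fun a ↦ hmove _ _
  refine homotopic_of_quotient (isOpenQuotientMap_cycle.restrictPreimage S)
    ⟨fun p ↦ ⟨cycle (F p), hF p⟩,
      (isOpenQuotientMap_cycle.continuous.comp F.continuous).subtype_mk _⟩ ?_ ?_ ?_
  · intro t x y hxy
    obtain ⟨σ, c, hc⟩ := cycle_eq_cycle.1 (congrArg Subtype.val hxy)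
    refine Subtype.ext (cycle_eq_cycle.2 ⟨σ, c, fun a ↦ ?_⟩)
    simp only [F, move, ContinuousMap.coe_mk, ← hc a, Units.smul_def, map_smul]
    module
  · exact fun x ↦ Subtype.ext (hf x x.2 _ fun a ↦ by simp [F, move]).symm
  · exact fun x ↦ Subtype.ext (congrArg cycle (funext fun a ↦ Subtype.ext (by simp [F, move])))

lemma contractibleSpace_avoiding {e : Fin (n + 1) → ℂ} (he : φ e = 1) :
    ContractibleSpace (avoiding φ : Set (SP (CP n) d)) := by
  have he₀ : e ≠ 0 := ne_zero_of_map_ne_zero (φ := φ) (by simp [he])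
  let y : (avoiding φ : Set (SP (CP n) d)) := ⟨cycle fun _ ↦ ⟨e, he₀⟩, by simp [he]⟩
  refine (contractible_iff_id_nullhomotopic _).2 ⟨y, .symm ?_⟩
  refine homotopic_id_of_section (Q := φ) (L := .toSpanSingleton ℂ _ e) (by simp [he])
    (by simp) (by simp +contextual) _ fun x hx z hz ↦ ?_
  exact cycle_eq_cycle.2 ⟨1, fun a ↦ .mk0 _ (cycle_mem_avoiding.1 hx a), fun a ↦ (hz a).symm⟩

end Avoiding

section LineCycle

variable {d n : ℕ} {φ ψ χ : Module.Dual ℂ (Fin (n + 1) → ℂ)} {L : ℂ × ℂ →ₗ[ℂ] Fin (n + 1) → ℂ}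

lemma ne_zero_of_section (hφ : ∀ p, φ (L p) = p.1) (z : ℂ) : L (1, z) ≠ 0 :=
  ne_zero_of_map_ne_zero (φ := φ) (by simp [hφ])

/-- The cycle supported on the line spanned by `L` whose affine coordinates there are the negatives
of the roots of the monic polynomial with the given coefficients. -/
noncomputable def lineCycle (hφ : ∀ p, φ (L p) = p.1) : C(Fin d → ℂ, SP (CP n) d) :=
  quotientLift isOpenQuotientMap_vieta
    ⟨fun w ↦ cycle fun a ↦ ⟨L (1, w a), ne_zero_of_section hφ _⟩, by
      have hL := L.continuous_of_finiteDimensional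
      exact isOpenQuotientMap_cycle.continuous.comp (by fun_prop)⟩
    fun w w' h ↦ by
      obtain ⟨σ, rfl⟩ := vieta_eq_vieta.1 h
      exact cycle_eq_cycle.2 ⟨σ, 1, fun a ↦ one_smul _ _⟩

lemma lineCycle_vieta (hφ : ∀ p, φ (L p) = p.1) (w : Fin d → ℂ) :
    lineCycle hφ (vieta w) = cycle fun a ↦ ⟨L (1, w a), ne_zero_of_section hφ _⟩ :=
  quotientLift_apply ..

lemma lineCycle_mem_avoiding_fst (hφ : ∀ p, φ (L p) = p.1) (c : Fin d → ℂ) :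
    lineCycle hφ c ∈ avoiding φ := by
  obtain ⟨w, rfl⟩ := vieta_surjective c
  simp [lineCycle_vieta, hφ]

lemma lineCycle_mem_avoiding_snd [NeZero d] (hφ : ∀ p, φ (L p) = p.1) (hψ : ∀ p, ψ (L p) = p.2)
    (c : Fin d → ℂ) : lineCycle hφ c ∈ avoiding ψ ↔ c 0 ≠ 0 := by
  obtain ⟨w, rfl⟩ := vieta_surjective c
  rw [lineCycle_vieta, vieta_zero_ne_zero]
  simp [hψ]

lemma lineCycle_zero_mem_avoiding (hφ : ∀ p, φ (L p) = p.1) (hχ : χ (L (1, 0)) ≠ 0) :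
    lineCycle hφ (0 : Fin d → ℂ) ∈ avoiding χ := by
  have hzero : vieta (0 : Fin d → ℂ) = 0 := by
    ext i
    simp [vieta, vietaPoly, Polynomial.coeff_X_pow, i.2.ne]
  rw [← hzero, lineCycle_vieta]
  simp [hχ]

variable [NeZero d]

/-- The coefficients of the monic polynomial with roots `-ψ / φ`. -/
noncomputable def ratioCoeff (φ ψ : Module.Dual ℂ (Fin (n + 1) → ℂ)) :
    C((avoiding φ ∩ avoiding ψ : Set (SP (CP n) d)), {c : Fin d → ℂ | c 0 ≠ 0}) :=
  quotientLift (isOpenQuotientMap_cycle.restrictPreimage _)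
    ⟨fun x ↦ ⟨vieta fun a ↦ ψ (x.1 a) / φ (x.1 a), vieta_zero_ne_zero.2 fun a ↦
        div_ne_zero (cycle_mem_avoiding.1 x.2.2 a) (cycle_mem_avoiding.1 x.2.1 a)⟩, by
      have hφ := φ.continuous_of_finiteDimensional
      have hψ := ψ.continuous_of_finiteDimensional
      have hcoord (a : Fin d) :
          Continuous fun x : cycle ⁻¹' (avoiding φ ∩ avoiding ψ) ↦ (x.1 a).1 :=
        continuous_subtype_val.comp ((continuous_apply a).comp continuous_subtype_val)
      refine (continuous_vieta.comp (continuous_pi fun a ↦ ?_)).subtype_mk _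
      exact (hψ.comp (hcoord a)).div (hφ.comp (hcoord a)) fun x ↦ cycle_mem_avoiding.1 x.2.1 a⟩
    fun x y hxy ↦ by
      obtain ⟨σ, c, hc⟩ := cycle_eq_cycle.1 (congrArg Subtype.val hxy)
      refine Subtype.ext (vieta_eq_vieta.2 ⟨σ, funext fun a ↦ ?_⟩)
      simp only [Function.comp_apply, ← hc, Units.smul_def, map_smul, smul_eq_mul]
      exact (mul_div_mul_left _ _ (c a).ne_zero).symm

lemma ratioCoeff_cycle {x : Fin d → Coordinates n} (hx : cycle x ∈ avoiding φ ∩ avoiding ψ) :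
    (ratioCoeff φ ψ ⟨cycle x, hx⟩).1 = vieta fun a ↦ ψ (x a) / φ (x a) :=
  congrArg Subtype.val (quotientLift_apply _ _ _ (⟨x, hx⟩ : cycle ⁻¹' _))

/-- Cycles avoiding two hyperplanes `φ = 0` and `ψ = 0` can be moved onto a line. -/
noncomputable def ratioEquiv (hφ : ∀ p, φ (L p) = p.1) (hψ : ∀ p, ψ (L p) = p.2) :
    (avoiding φ ∩ avoiding ψ : Set (SP (CP n) d)) ≃ₕ {c : Fin d → ℂ | c 0 ≠ 0} where
  toFun := ratioCoeff φ ψ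
  invFun := ⟨fun c ↦ ⟨lineCycle hφ c.1, lineCycle_mem_avoiding_fst hφ _,
    (lineCycle_mem_avoiding_snd hφ hψ _).2 c.2⟩, by fun_prop⟩
  left_inv := by
    refine homotopic_id_of_section (Q := φ.prod ψ) (L := L) (by simp [hφ, hψ])
      (by simp +contextual) (by simp +contextual) _ fun x hx y hy ↦ ?_
    change lineCycle hφ (ratioCoeff φ ψ ⟨cycle x, hx⟩).1 = _
    rw [ratioCoeff_cycle, lineCycle_vieta]
    refine cycle_eq_cycle.2 ⟨1, fun a ↦ .mk0 _ (cycle_mem_avoiding.1 hx.1 a), fun a ↦ ?_⟩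
    simp [hy, Units.smul_def, ← map_smul, mul_div_cancel₀ _ (cycle_mem_avoiding.1 hx.1 a)]
  right_inv := by
    convert ContinuousMap.Homotopic.refl _
    ext1 ⟨c, hc⟩
    obtain ⟨w, rfl⟩ := vieta_surjective c
    refine Subtype.ext ?_
    have hmem : lineCycle hφ (vieta w) ∈ avoiding φ ∩ avoiding ψ :=
      ⟨lineCycle_mem_avoiding_fst hφ _, (lineCycle_mem_avoiding_snd hφ hψ _).2 hc⟩
    change vieta w = (ratioCoeff φ ψ ⟨lineCycle hφ (vieta w), hmem⟩).1
    simp only [lineCycle_vieta, ratioCoeff_cycle, hφ, hψ, div_one]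

/-- The homotopy equivalence sending a cycle to the product of the values of `ψ / φ` at its
points. -/
noncomputable def interAvoidingEquiv (hφ : ∀ p, φ (L p) = p.1) (hψ : ∀ p, ψ (L p) = p.2) :
    (avoiding φ ∩ avoiding ψ : Set (SP (CP n) d)) ≃ₕ ({0}ᶜ : Set ℂ) :=
  (ratioEquiv hφ hψ).trans
    (nonvanishingEquiv (.proj 0 : (Fin d → ℂ) →L[ℂ] ℂ) (e := Pi.single 0 1)
      (by rw [ContinuousLinearMap.proj_apply, Pi.single_eq_same]))

lemma interAvoidingEquiv_cycle (hφ : ∀ p, φ (L p) = p.1) (hψ : ∀ p, ψ (L p) = p.2)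
    {x : Fin d → Coordinates n} (hx : cycle x ∈ avoiding φ ∩ avoiding ψ) :
    (interAvoidingEquiv hφ hψ ⟨cycle x, hx⟩).1 = ∏ a, ψ (x a) / φ (x a) :=
  (congrFun (ratioCoeff_cycle hx) 0).trans (vieta_zero _)

lemma nullhomotopic_inclusion_interAvoiding (hφ : ∀ p, φ (L p) = p.1) (hψ : ∀ p, ψ (L p) = p.2)
    (hχ : χ (L (1, 0)) ≠ 0) {W : Set (SP (CP n) d)}
    (hW : W = avoiding φ ∩ avoiding ψ ∪ avoiding φ ∩ avoiding χ)
    (h : avoiding φ ∩ avoiding ψ ⊆ W) : (ContinuousMap.inclusion h).Nullhomotopic := by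
  have hmem (z : ℂ) : lineCycle hφ (z • Pi.single (0 : Fin d) 1) ∈ W := by
    rw [hW, ← Set.inter_union_distrib_left]
    refine ⟨lineCycle_mem_avoiding_fst hφ _, ?_⟩
    by_cases hz : z = 0
    · right
      rw [hz, zero_smul]
      exact lineCycle_zero_mem_avoiding hφ hχ
    · exact .inl ((lineCycle_mem_avoiding_snd hφ hψ _).2 (by simpa using hz))
  let Γ : C(ℂ, W) := ⟨fun z ↦ ⟨_, hmem z⟩, by fun_prop⟩
  let e := interAvoidingEquiv (d := d) hφ hψ
  have hΓ : Γ.Nullhomotopic := (id_nullhomotopic ℂ).comp_right Γ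
  obtain ⟨y, hy⟩ := hΓ.comp_left ((ContinuousMap.mk Subtype.val).comp e.toFun)
  refine ⟨y, .trans (.symm ?_) hy⟩
  exact (ContinuousMap.Homotopic.refl (ContinuousMap.inclusion h)).comp e.left_inv

end LineCycle

section PathConnected

variable {d n : ℕ} {φ : Module.Dual ℂ (Fin (n + 1) → ℂ)} {e : Fin (n + 1) → ℂ}

/-- The cycle all of whose points are the line spanned by `e`. -/
noncomputable def constCycle (d : ℕ) (he : e ≠ 0) : SP (CP n) d := cycle fun _ ↦ ⟨e, he⟩

lemma isPathConnected_forall_add_mul_ne_zero {ι : Type*} [Countable ι] {f : ι → ℂ}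
    (hf : ∀ i, f i ≠ 0) : IsPathConnected {z : ℂ | ∀ i, f i + z * (1 - f i) ≠ 0} := by
  have hbad : (⋃ i, {z | f i + z * (1 - f i) = 0}).Countable := by
    refine Set.countable_iUnion fun i ↦ Set.Subsingleton.countable fun z hz w hw ↦ ?_
    have hslope : 1 - f i ≠ 0 := by
      intro h
      exact hf i (by simpa [h] using hz)
    exact mul_right_cancel₀ hslope (add_left_cancel (hz.trans hw.symm))
  convert hbad.isPathConnected_compl_of_one_lt_rank (E := ℂ) (by simp [Complex.rank_real_complex])
  ext z
  simp

lemma joinedIn_constCycle {Φ : Set (Module.Dual ℂ (Fin (n + 1) → ℂ))} (hΦ : Φ.Countable)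
    (hne : Φ.Nonempty) (he : ∀ φ ∈ Φ, φ e = 1) (he₀ : e ≠ 0) {y : SP (CP n) d}
    (hy : ∀ φ ∈ Φ, y ∈ avoiding φ) : JoinedIn (⋂ φ ∈ Φ, avoiding φ) y (constCycle d he₀) := by
  obtain ⟨x, rfl⟩ := isOpenQuotientMap_cycle.surjective y
  let move (z : ℂ) (a : Fin d) : Fin (n + 1) → ℂ := (x a).1 + z • (e - (x a).1)
  have hmove {φ} (hφ : φ ∈ Φ) (z a) : φ (move z a) = φ (x a) + z * (1 - φ (x a)) := by
    simp [move, he φ hφ]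
  let good : Set ℂ := {z | ∀ φ ∈ Φ, ∀ a, φ (move z a) ≠ 0}
  have hgood : IsPathConnected good := by
    have := hΦ.to_subtype
    convert isPathConnected_forall_add_mul_ne_zero
      (fun p : Φ × Fin d ↦ cycle_mem_avoiding.1 (hy p.1 p.1.2) p.2) using 1
    ext z
    simp +contextual [good, hmove]
  have hne' (z : good) (a) : move z a ≠ 0 := by
    obtain ⟨φ, hφ⟩ := hne
    exact ne_zero_of_map_ne_zero (φ := φ) (z.2 φ hφ a)
  let γ (z : good) : SP (CP n) d := cycle fun a ↦ ⟨move z a, hne' z a⟩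
  have hγ : Continuous γ := isOpenQuotientMap_cycle.continuous.comp (by fun_prop)
  have : PathConnectedSpace good := isPathConnected_iff_pathConnectedSpace.1 hgood
  have h₀ : (0 : ℂ) ∈ good := fun φ hφ a ↦ by
    simpa [move] using cycle_mem_avoiding.1 (hy φ hφ) a
  have h₁ : (1 : ℂ) ∈ good := fun φ hφ a ↦ by simp [move, he φ hφ]
  have hjoined := (isPathConnected_range hγ).joinedIn (γ ⟨0, h₀⟩) ⟨_, rfl⟩ (γ ⟨1, h₁⟩) ⟨_, rfl⟩
  convert hjoined.mono _ using 1
  · simp [γ, move]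
  · simp [γ, move, constCycle]
  · rintro _ ⟨z, rfl⟩
    exact Set.mem_iInter₂.2 fun φ hφ ↦ cycle_mem_avoiding.2 (z.2 φ hφ)

lemma constCycle_mem_avoiding (he : φ e = 1) (he₀ : e ≠ 0) : constCycle d he₀ ∈ avoiding φ := by
  simp [constCycle, he]

lemma isPathConnected_iUnion_iInter_avoiding {ι : Type*} [Nonempty ι]
    (Φ : ι → Set (Module.Dual ℂ (Fin (n + 1) → ℂ))) (hΦ : ∀ i, (Φ i).Countable)
    (hne : ∀ i, (Φ i).Nonempty) (he : ∀ i, ∀ φ ∈ Φ i, φ e = 1) (he₀ : e ≠ 0) :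
    IsPathConnected (⋃ i, ⋂ φ ∈ Φ i, avoiding φ : Set (SP (CP n) d)) := by
  have hmem (i : ι) : constCycle d he₀ ∈ ⋂ φ ∈ Φ i, avoiding φ :=
    Set.mem_iInter₂.2 fun φ hφ ↦ constCycle_mem_avoiding (he i φ hφ) he₀
  obtain ⟨i₀⟩ := ‹Nonempty ι›
  refine ⟨_, Set.mem_iUnion.2 ⟨i₀, hmem i₀⟩, fun {y} hy ↦ ?_⟩
  obtain ⟨i, hi⟩ := Set.mem_iUnion.1 hy
  exact ((joinedIn_constCycle (hΦ i) (hne i) (he i) he₀ (Set.mem_iInter₂.1 hi)).mono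
    (Set.subset_iUnion_of_subset i subset_rfl)).symm

end PathConnected

section EvalForm

open Polynomial

variable {d n : ℕ} {s t u : ℂ}

/-- The linear form evaluating at `t` the polynomial with the given coefficients. -/
noncomputable def evalForm (t : ℂ) : Module.Dual ℂ (Fin (n + 1) → ℂ) :=
  leval t ∘ₗ ofFn (n + 1)

lemma evalForm_apply (v : Fin (n + 1) → ℂ) : evalForm t v = (ofFn (n + 1) v).eval t := rfl

lemma evalForm_single_zero : evalForm t (Pi.single (0 : Fin (n + 1)) 1) = 1 := by
  simp [evalForm_apply, ofFn_eq_sum_monomial, Pi.single_apply, eval_finsetSum]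

/-- The coefficients of the affine polynomial taking prescribed values at `s` and `t`. -/
noncomputable def lineSection (n : ℕ) (s t : ℂ) : ℂ × ℂ →ₗ[ℂ] Fin (n + 1) → ℂ :=
  toFn (n + 1) ∘ₗ ((LinearMap.fst ℂ ℂ ℂ).smulRight (Lagrange.basisDivisor s t) +
    (LinearMap.snd ℂ ℂ ℂ).smulRight (Lagrange.basisDivisor t s))

lemma evalForm_lineSection [NeZero n] (p : ℂ × ℂ) : evalForm u (lineSection n s t p) =
    p.1 * (Lagrange.basisDivisor s t).eval u + p.2 * (Lagrange.basisDivisor t s).eval u := by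
  have hdeg (x y : ℂ) : (Lagrange.basisDivisor x y).natDegree ≤ 1 := by
    by_cases h : x = y
    · rw [h, Lagrange.natDegree_basisDivisor_self]
      exact zero_le_one
    · exact (Lagrange.natDegree_basisDivisor_of_ne h).le
  rw [evalForm_apply, lineSection, LinearMap.comp_apply, ofFn_comp_toFn_eq_id_of_natDegree_lt]
  · simp
  · refine lt_of_le_of_lt ?_ (Nat.lt_add_of_pos_left (Nat.pos_of_neZero n))
    exact natDegree_add_le_of_degree_le ((natDegree_smul_le _ _).trans (hdeg _ _))
      ((natDegree_smul_le _ _).trans (hdeg _ _))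

lemma evalForm_left_lineSection [NeZero n] (hst : s ≠ t) (p : ℂ × ℂ) :
    evalForm s (lineSection n s t p) = p.1 := by
  simp [evalForm_lineSection, Lagrange.eval_basisDivisor_left_of_ne hst]

lemma evalForm_right_lineSection [NeZero n] (hst : s ≠ t) (p : ℂ × ℂ) :
    evalForm t (lineSection n s t p) = p.2 := by
  simp [evalForm_lineSection, Lagrange.eval_basisDivisor_left_of_ne hst.symm]

lemma evalForm_lineSection_ne_zero [NeZero n] (hst : s ≠ t) (hut : u ≠ t) :
    evalForm u (lineSection n s t (1, 0)) ≠ 0 := by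
  simp [evalForm_lineSection, Lagrange.basisDivisor, sub_ne_zero, hst, hut]

/-- The product of the points of a cycle, viewed as polynomials of degree at most `n`. -/
noncomputable def prodPoly (x : Fin d → Coordinates n) : ℂ[X] := ∏ a, ofFn (n + 1) (x a).1

lemma eval_prodPoly (x : Fin d → Coordinates n) :
    (prodPoly x).eval t = ∏ a, evalForm t (x a).1 :=
  eval_prod ..

lemma prodPoly_ne_zero (x : Fin d → Coordinates n) : prodPoly x ≠ 0 :=
  Finset.prod_ne_zero_iff.2 fun a _ ↦ (map_ne_zero_iff _ (injective_ofFn _)).2 (x a).2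

lemma natDegree_prodPoly_lt (x : Fin d → Coordinates n) :
    (prodPoly x).natDegree < n * d + 1 := by
  have hdeg (a) (_ : a ∈ Finset.univ) : (ofFn (n + 1) (x a).1).natDegree ≤ n :=
    Nat.lt_succ_iff.1 (ofFn_natDegree_lt (Nat.le_add_left 1 n) _)
  refine Nat.lt_succ_iff.2 ((natDegree_prod_le _ _).trans
    ((Finset.sum_le_card_nsmul _ _ n hdeg).trans_eq ?_))
  simp [mul_comm]

lemma iUnion_avoiding_evalForm :
    ⋃ i < n * d + 1, avoiding (evalForm (i : ℂ)) = (Set.univ : Set (SP (CP n) d)) := by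
  refine Set.eq_univ_of_forall fun y ↦ ?_
  obtain ⟨x, rfl⟩ := isOpenQuotientMap_cycle.surjective y
  by_contra! h
  refine prodPoly_ne_zero x (eq_zero_of_natDegree_lt_card_of_eval_eq_zero _
    (f := fun i : Fin (n * d + 1) ↦ (i : ℂ)) (Nat.cast_injective.comp Fin.val_injective)
    (fun i ↦ ?_) (by simpa using natDegree_prodPoly_lt x))
  simp only [Set.mem_iUnion₂, cycle_mem_avoiding, not_exists, not_forall, not_not] at h
  obtain ⟨a, ha⟩ := h i i.2
  rw [eval_prodPoly]
  exact Finset.prod_eq_zero (Finset.mem_univ a) ha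

end EvalForm

section EvalOpen

open ReducedHomologyOn MayerVietoris

variable {R : Type} [CommRing R] {d n : ℕ}

/-- The cycles whose points, viewed as polynomials of degree at most `n`, do not vanish at `i`. -/
abbrev evalOpen (d n i : ℕ) : Set (SP (CP n) d) := avoiding (evalForm (i : ℂ))

instance (i m : ℕ) : Subsingleton (ReducedHomologyOn R m (evalOpen d n i)) := by
  have := contractibleSpace_avoiding (d := d) (evalForm_single_zero (n := n) (t := i))
  exact ReducedHomologyOn.subsingleton

instance subsingleton_iUnion_inter_inter (k m : ℕ) : Subsingleton (ReducedHomologyOn R 1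
    ((⋃ j < k, evalOpen d n m ∩ evalOpen d n j) ∩ (evalOpen d n m ∩ evalOpen d n k))) := by
  obtain rfl | hk := eq_or_ne k 0
  · have hempty : (⋃ j < 0, evalOpen d n m ∩ evalOpen d n j) ∩ (evalOpen d n m ∩ evalOpen d n 0)
      = ∅ := by simp
    rw [hempty]
    infer_instance
  have : NeZero k := ⟨hk⟩
  let Φ (i : Fin k) : Set (Module.Dual ℂ (Fin (n + 1) → ℂ)) :=
    {evalForm (m : ℂ), evalForm (i : ℂ), evalForm (k : ℂ)}
  have he₀ : (Pi.single 0 1 : Fin (n + 1) → ℂ) ≠ 0 := by simp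
  have hconn := isPathConnected_iUnion_iInter_avoiding (d := d) Φ (fun i ↦ Set.to_countable _)
    (fun i ↦ Set.insert_nonempty _ _) (by simp [Φ, evalForm_single_zero]) he₀
  have hΦ : (⋃ j < k, evalOpen d n m ∩ evalOpen d n j) ∩ (evalOpen d n m ∩ evalOpen d n k) =
      ⋃ i, ⋂ φ ∈ Φ i, avoiding φ := by
    ext y
    simp only [Φ, Set.mem_inter_iff, Set.mem_iUnion, Fin.exists_iff, Set.biInter_insert,
      Set.biInter_singleton, exists_prop]
    grind
  rw [← hΦ, isPathConnected_iff_pathConnectedSpace] at hconn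
  exact ReducedHomologyOn.subsingleton

variable [NeZero d] [NeZero n]

lemma incl_inter_evalOpen_eq_zero {i m k : ℕ} (hm : 2 ≤ m) (hi : i < m)
    (h : evalOpen d n m ∩ evalOpen d n i ⊆ ⋃ j < m, evalOpen d n m ∩ evalOpen d n j)
    (x : ReducedHomologyOn R k (evalOpen d n m ∩ evalOpen d n i)) : incl h x = 0 := by
  obtain ⟨j, hj, hji⟩ : ∃ j < m, j ≠ i := by
    obtain rfl | hi₀ := eq_or_ne i 0
    · exact ⟨1, hm, one_ne_zero⟩
    · exact ⟨0, by lia, hi₀.symm⟩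
  have hmi : (m : ℂ) ≠ i := by exact_mod_cast hi.ne'
  have hpair : evalOpen d n m ∩ evalOpen d n i ∪ evalOpen d n m ∩ evalOpen d n j ⊆
      ⋃ j < m, evalOpen d n m ∩ evalOpen d n j :=
    Set.union_subset h (Set.subset_biUnion_of_mem (u := fun j ↦ evalOpen d n m ∩ evalOpen d n j) hj)
  rw [← incl_incl Set.subset_union_left hpair]
  rw [incl_eq_zero_of_nullhomotopic _ (nullhomotopic_inclusion_interAvoiding
    (evalForm_left_lineSection hmi) (evalForm_right_lineSection hmi)
    (evalForm_lineSection_ne_zero hmi (by exact_mod_cast hji)) rfl _), map_zero]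

lemma subsingleton_iUnion_inter_evalOpen {m : ℕ} (hm : 2 ≤ m) :
    Subsingleton (ReducedHomologyOn R 2 ((⋃ j < m, evalOpen d n j) ∩ evalOpen d n m)) := by
  rw [Set.inter_comm, Set.inter_iUnion₂]
  refine subsingleton_of_forall_eq 0 fun x ↦ ?_
  rw [← incl_self subset_rfl x]
  exact incl_biUnion_eq_zero (fun i ↦ isOpen_avoiding.inter isOpen_avoiding)
    (fun i _ ↦ subsingleton_iUnion_inter_inter i m)
    (fun i hi h x ↦ incl_inter_evalOpen_eq_zero hm hi h x) _ x

/-- The isomorphism `H₂(U₀ ∪ U₁) ≅ H₁(ℂ ∖ {0})`, where `U_i` is `evalOpen d n i`. -/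
noncomputable def evalOpenUnionEquiv (R : Type) [CommRing R] :
    ReducedHomologyOn R 3 (evalOpen d n 0 ∪ evalOpen d n 1) ≃ₗ[R]
      ReducedHomology R 2 ({0}ᶜ : Set ℂ) :=
  have h₀₁ : ((0 : ℕ) : ℂ) ≠ (1 : ℕ) := by simp
  suspensionEquiv isOpen_avoiding isOpen_avoiding ≪≫ₗ equiv.symm ≪≫ₗ
    ReducedHomology.congr (interAvoidingEquiv (evalForm_left_lineSection h₀₁)
      (evalForm_right_lineSection h₀₁))

end EvalOpen

section Multiplication

open Polynomial

variable {d n : ℕ} {t : ℂ}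

/-- Homogeneous coordinates of the product of the points of a cycle, viewed as polynomials. -/
noncomputable def prodCoordinates (x : Fin d → Coordinates n) : Coordinates (n * d) :=
  ⟨toFn _ (prodPoly x), fun h ↦ prodPoly_ne_zero x <| by
    rw [← ofFn_comp_toFn_eq_id_of_natDegree_lt (natDegree_prodPoly_lt x), h, map_zero]⟩

lemma evalForm_prodCoordinates (x : Fin d → Coordinates n) :
    evalForm t (prodCoordinates x).1 = ∏ a, evalForm t (x a).1 := by
  rw [← eval_prodPoly, evalForm_apply, prodCoordinates,
    ofFn_comp_toFn_eq_id_of_natDegree_lt (natDegree_prodPoly_lt x)]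

lemma continuous_prodCoordinates :
    Continuous (prodCoordinates : (Fin d → Coordinates n) → Coordinates (n * d)) := by
  have hcoeff (s : Finset (Fin d)) (k : ℕ) :
      Continuous fun x : Fin d → Coordinates n ↦ (∏ a ∈ s, ofFn (n + 1) (x a).1).coeff k := by
    induction s using Finset.induction_on generalizing k with
    | empty => exact continuous_const
    | insert a s ha ih =>
      have hlin (k : ℕ) := (lcoeff ℂ k ∘ₗ ofFn (n + 1)).continuous_of_finiteDimensional
      have hofFn (k) : Continuous fun x : Fin d → Coordinates n ↦ (ofFn (n + 1) (x a).1).coeff k :=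
        (hlin k).comp (by fun_prop)
      simp only [Finset.prod_insert ha, coeff_mul]
      fun_prop
  have htoFn : Continuous fun x : Fin d → Coordinates n ↦ toFn (n * d + 1) (prodPoly x) :=
    continuous_pi fun k ↦ hcoeff Finset.univ k
  exact htoFn.subtype_mk _

/-- Multiplication of polynomials, as a map `SP^d(ℂPⁿ) → SP^1(ℂP^{nd}) = ℂP^{nd}`. -/
noncomputable def multiplication (d n : ℕ) : C(SP (CP n) d, SP (CP (n * d)) 1) :=
  quotientLift isOpenQuotientMap_cycle
    ⟨fun x ↦ cycle fun _ ↦ prodCoordinates x, isOpenQuotientMap_cycle.continuous.comp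
      (continuous_pi fun _ ↦ continuous_prodCoordinates)⟩
    fun x y hxy ↦ by
      obtain ⟨σ, c, hc⟩ := cycle_eq_cycle.1 hxy
      refine cycle_eq_cycle.2 ⟨1, fun _ ↦ ∏ a, c a, fun _ ↦ ?_⟩
      have hpoly : prodPoly y = (∏ a, (c a : ℂ)) • prodPoly x := by
        simp only [prodPoly, ← hc, Units.smul_def, map_smul, Finset.prod_smul]
        rw [Equiv.prod_comp σ fun a ↦ ofFn (n + 1) (x a).1]
      simp [prodCoordinates, hpoly, Units.smul_def]

lemma multiplication_cycle (x : Fin d → Coordinates n) :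
    multiplication d n (cycle x) = cycle fun _ ↦ prodCoordinates x :=
  quotientLift_apply ..

lemma mapsTo_multiplication (i : ℕ) :
    Set.MapsTo (multiplication d n) (evalOpen d n i) (evalOpen 1 (n * d) i) := by
  rintro _ ⟨x, hx, rfl⟩
  rw [multiplication_cycle, cycle_mem_avoiding]
  exact fun _ ↦ (evalForm_prodCoordinates x).trans_ne (Finset.prod_ne_zero_iff.2 fun a _ ↦ hx a)

end Multiplication

section ProjectiveSpace

open Polynomial

variable {n : ℕ} {F : Type} [NormedAddCommGroup F] [NormedSpace ℂ F]
  {P : (Fin (n + 1) → ℂ) →ₗ[ℂ] F} {φ : Module.Dual ℂ (Fin (n + 1) → ℂ)} {S : Set (SP (CP n) 1)}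

/-- The affine coordinates `P / φ`, on the part of the chart `φ ≠ 0` of projective space where
they do not all vanish. -/
noncomputable def affineCoordinates
    (hS : ∀ x, cycle x ∈ S ↔ P (x 0).1 ≠ 0 ∧ φ (x 0).1 ≠ 0) : C(S, ({0}ᶜ : Set F)) :=
  quotientLift (isOpenQuotientMap_cycle.restrictPreimage S)
    ⟨fun x ↦ ⟨(φ (x.1 0))⁻¹ • P (x.1 0),
        smul_ne_zero (inv_ne_zero ((hS x).1 x.2).2) ((hS x).1 x.2).1⟩,
      have hcoord : Continuous fun x : cycle ⁻¹' S ↦ (x.1 0).1 :=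
        continuous_subtype_val.comp ((continuous_apply 0).comp continuous_subtype_val)
      (((φ.continuous_of_finiteDimensional.comp hcoord).inv₀ fun x ↦ ((hS x).1 x.2).2).smul
        (P.continuous_of_finiteDimensional.comp hcoord)).subtype_mk _⟩
    fun x y hxy ↦ by
      obtain ⟨σ, c, hc⟩ := cycle_eq_cycle.1 (congrArg Subtype.val hxy)
      have hc₀ : c 0 • (x.1 0).1 = (y.1 0).1 := by rw [← hc, Subsingleton.elim (σ 0) 0]
      refine Subtype.ext ?_
      simp [← hc₀, Units.smul_def, smul_smul]

lemma affineCoordinates_cycle (hS : ∀ x, cycle x ∈ S ↔ P (x 0).1 ≠ 0 ∧ φ (x 0).1 ≠ 0)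
    {x : Fin 1 → Coordinates n} (hx : cycle x ∈ S) :
    (affineCoordinates hS ⟨cycle x, hx⟩).1 = (φ (x 0))⁻¹ • P (x 0) :=
  congrArg Subtype.val (quotientLift_apply (isOpenQuotientMap_cycle.restrictPreimage S) _ _ ⟨x, hx⟩)

/-- The part of the chart `φ ≠ 0` of projective space outside the linear subspace `P = 0`
deformation retracts onto a punctured complement of that subspace. -/
noncomputable def puncturedChartEquiv [FiniteDimensional ℂ F]
    {L : F × ℂ →ₗ[ℂ] Fin (n + 1) → ℂ} (hP : ∀ p, P (L p) = p.1) (hφ : ∀ p, φ (L p) = p.2)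
    (hS : ∀ x, cycle x ∈ S ↔ P (x 0).1 ≠ 0 ∧ φ (x 0).1 ≠ 0) : S ≃ₕ ({0}ᶜ : Set F) where
  toFun := affineCoordinates hS
  invFun :=
    have hL (w : ({0}ᶜ : Set F)) : L (w, 1) ≠ 0 :=
      ne_zero_of_map_ne_zero (φ := φ) (by simp [hφ])
    have hcont : Continuous fun w : ({0}ᶜ : Set F) ↦ L (w, 1) :=
      L.continuous_of_finiteDimensional.comp (by fun_prop)
    ⟨fun w ↦ ⟨cycle fun _ ↦ ⟨L (w, 1), hL w⟩, (hS _).2 ⟨(hP _).trans_ne w.2, by simp [hφ]⟩⟩,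
      (isOpenQuotientMap_cycle.continuous.comp
        (continuous_pi fun _ ↦ hcont.subtype_mk _)).subtype_mk _⟩
  left_inv := by
    refine homotopic_id_of_section (Q := P.prod φ) (L := L) (fun p ↦ Prod.ext (hP p) (hφ p))
      (fun x hx a h ↦ ((hS x).1 hx).2 ?_) (fun x y hx hxy ↦ ?_) _ fun x hx y hy ↦ ?_
    · rw [Subsingleton.elim 0 a]
      exact congrArg Prod.snd h
    · rw [hS] at hx ⊢
      exact ⟨(congrArg Prod.fst (hxy 0)).trans_ne hx.1, (congrArg Prod.snd (hxy 0)).trans_ne hx.2⟩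
    · have hφx := ((hS x).1 hx).2
      refine cycle_eq_cycle.2 ⟨1, fun _ ↦ .mk0 _ hφx, fun a ↦ ?_⟩
      rw [hy a, Subsingleton.elim a 0, Units.smul_def, Units.val_mk0, ← map_smul]
      simp [hφx, affineCoordinates_cycle]
  right_inv := by
    convert ContinuousMap.Homotopic.refl _
    ext w
    refine ((affineCoordinates_cycle hS _).trans ?_).symm
    simp [hP, hφ]

lemma exists_section_evalForm {m : ℕ} (hm : m ≤ n) :
    ∃ L : (Fin m → ℂ) × ℂ →ₗ[ℂ] Fin (n + 1) → ℂ,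
      (∀ p, LinearMap.pi (fun i : Fin m ↦ evalForm (i : ℂ)) (L p) = p.1) ∧
        ∀ p, evalForm (m : ℂ) (L p) = p.2 := by
  let Q := (LinearMap.pi fun i : Fin m ↦ evalForm (n := n) (i : ℂ)).prod (evalForm (m : ℂ))
  have hinj : Set.InjOn (fun i : Fin (m + 1) ↦ (i : ℂ)) (Finset.univ : Finset (Fin (m + 1))) :=
    (Nat.cast_injective.comp Fin.val_injective).injOn
  have hQ : Function.Surjective Q := fun p ↦ by
    let q : ℂ[X] := Lagrange.interpolate Finset.univ (fun i : Fin (m + 1) ↦ (i : ℂ))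
      (Fin.snoc (α := fun _ ↦ ℂ) p.1 p.2)
    have hdeg : q.natDegree ≤ m :=
      natDegree_le_of_degree_le (by simpa [q] using Lagrange.degree_interpolate_le _ hinj)
    have heval (i : Fin (m + 1)) :
        evalForm (i : ℂ) (toFn (n + 1) q) = Fin.snoc (α := fun _ ↦ ℂ) p.1 p.2 i := by
      rw [evalForm_apply, ofFn_comp_toFn_eq_id_of_natDegree_lt (by lia)]
      exact Lagrange.eval_interpolate_at_node _ hinj (Finset.mem_univ i)
    refine ⟨toFn (n + 1) q, Prod.ext (funext fun i ↦ ?_) ?_⟩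
    · exact (heval i.castSucc).trans (Fin.snoc_castSucc ..)
    · simpa [Q] using heval (.last m)
  obtain ⟨L, hL⟩ := Q.exists_rightInverse_of_surjective (LinearMap.range_eq_top.2 hQ)
  have hQL (p) : Q (L p) = p := LinearMap.congr_fun hL p
  exact ⟨L, fun p ↦ congrArg Prod.fst (hQL p), fun p ↦ congrArg Prod.snd (hQL p)⟩

variable {R : Type} [CommRing R]

lemma subsingleton_iUnion_inter_evalOpen_one {k m : ℕ} (hk : k < 2 * m) (hm : m ≤ n) :
    Subsingleton (ReducedHomologyOn R k ((⋃ j < m, evalOpen 1 n j) ∩ evalOpen 1 n m)) := by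
  obtain ⟨L, hP, hφ⟩ := exists_section_evalForm hm
  have hS (x : Fin 1 → Coordinates n) :
      cycle x ∈ (⋃ j < m, evalOpen 1 n j) ∩ evalOpen 1 n m ↔
        LinearMap.pi (fun i : Fin m ↦ evalForm (i : ℂ)) (x 0).1 ≠ 0 ∧ evalForm m (x 0).1 ≠ 0 := by
    simp [Function.ne_iff, Fin.exists_iff]
  have hrank : k < Module.finrank ℝ (Fin m → ℂ) := by
    simpa [Module.finrank_pi_fintype, mul_comm] using hk
  have := subsingleton_punctured (R := R) hrank
  have := (ReducedHomology.congr (R := R) (n := k) (puncturedChartEquiv hP hφ hS)).subsingleton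
  exact ReducedHomologyOn.subsingleton

end ProjectiveSpace

section Comparison

open ReducedHomologyOn MayerVietoris

variable {R : Type} [CommRing R] {d n : ℕ}

lemma evalOpen_union_eq : evalOpen d n 0 ∪ evalOpen d n 1 = ⋃ i < 2, evalOpen d n i := by
  rw [Set.biUnion_lt_succ, Set.biUnion_lt_succ]
  simp

variable [NeZero n]

lemma incl_evalOpen_union_injective_one :
    Function.Injective
      (incl (R := R) (n := 3) (Set.subset_univ (evalOpen 1 n 0 ∪ evalOpen 1 n 1))) := by
  have hn := NeZero.pos n
  exact incl_biUnion_injective (fun _ ↦ isOpen_avoiding) (by lia)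
    (fun i hi hin ↦ subsingleton_iUnion_inter_evalOpen_one (by lia) (by lia))
    evalOpen_union_eq iUnion_avoiding_evalForm.symm _

variable [NeZero d]

lemma map_multiplication_injective {i j k : ℕ} (hij : i ≠ j) :
    Function.Injective (map (R := R) (n := k) (multiplication d n)
      ((mapsTo_multiplication i).inter_inter (mapsTo_multiplication j))) := by
  have hN : NeZero (n * d) := ⟨mul_ne_zero (NeZero.ne n) (NeZero.ne d)⟩
  have hij' : (i : ℂ) ≠ j := by exact_mod_cast hij
  refine map_injective_of_homotopyEquiv _ _
    (interAvoidingEquiv (evalForm_left_lineSection hij') (evalForm_right_lineSection hij')).toFun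
    (interAvoidingEquiv (evalForm_left_lineSection hij') (evalForm_right_lineSection hij')) ?_
  rintro ⟨x, hx⟩
  obtain ⟨x, rfl⟩ := isOpenQuotientMap_cycle.surjective x
  refine Subtype.ext ?_
  simp only [multiplication_cycle]
  refine (interAvoidingEquiv_cycle ..).trans (.trans ?_ (interAvoidingEquiv_cycle ..).symm)
  simp [evalForm_prodCoordinates]

lemma incl_evalOpen_union_injective :
    Function.Injective
      (incl (R := R) (n := 3) (Set.subset_univ (evalOpen d n 0 ∪ evalOpen d n 1))) := by
  refine (injective_iff_map_eq_zero _).2 fun x hx ↦ ?_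
  have hN : NeZero (n * d) := ⟨mul_ne_zero (NeZero.ne n) (NeZero.ne d)⟩
  have hunion := (mapsTo_multiplication (d := d) (n := n) 0).union_union (mapsTo_multiplication 1)
  have hmap : map (multiplication d n) hunion x = 0 :=
    incl_evalOpen_union_injective_one <| by
      rw [map_zero, ← map_incl _ (Set.subset_univ _) _ _ (Set.mapsTo_univ _ _), hx, map_zero]
  refine (map_eq_zero_iff _ (δ_injective isOpen_avoiding isOpen_avoiding)).1
    ((map_eq_zero_iff _ (map_multiplication_injective zero_ne_one)).1 ?_)
  rw [map_δ isOpen_avoiding isOpen_avoiding _ (mapsTo_multiplication 0) (mapsTo_multiplication 1),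
    hmap, map_zero]

lemma incl_evalOpen_union_surjective :
    Function.Surjective
      (incl (R := R) (n := 3) (Set.subset_univ (evalOpen d n 0 ∪ evalOpen d n 1))) := by
  have hnd := Nat.mul_pos (NeZero.pos n) (NeZero.pos d)
  exact incl_biUnion_surjective (fun _ ↦ isOpen_avoiding) (by lia) (fun i _ ↦ inferInstance)
    (fun i hi ↦ subsingleton_iUnion_inter_evalOpen hi)
    evalOpen_union_eq iUnion_avoiding_evalForm.symm _

end Comparison

end SP

/-! ### Singular homology -/

section SingularHomology

open CategoryTheory

/-- The homology of a short complex of modules, computed through isomorphisms of its terms. -/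
noncomputable def shortComplexHomologyEquiv {R : Type*} [CommRing R]
    (S : ShortComplex (ModuleCat.{0} R)) {C₁ C₂ C₃ : Type*}
    [AddCommGroup C₁] [AddCommGroup C₂] [AddCommGroup C₃] [Module R C₁] [Module R C₂] [Module R C₃]
    (e₁ : S.X₁ ≃ₗ[R] C₁) (e₂ : S.X₂ ≃ₗ[R] C₂) (e₃ : S.X₃ ≃ₗ[R] C₃) (f : C₁ →ₗ[R] C₂)
    (g : C₂ →ₗ[R] C₃) (hf : ∀ x, e₂ (S.f.hom x) = f (e₁ x))
    (hg : ∀ x, e₃ (S.g.hom x) = g (e₂ x)) :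
    S.homology ≃ₗ[R] Subquotient (LinearMap.ker g) (LinearMap.range f) := by
  have hker : (LinearMap.ker S.g.hom).map e₂.toLinearMap = LinearMap.ker g := by
    ext x
    rw [Submodule.mem_map_equiv, LinearMap.mem_ker, LinearMap.mem_ker, ← e₃.map_eq_zero_iff, hg,
      e₂.apply_symm_apply]
  refine S.moduleCatHomologyIso.toLinearEquiv ≪≫ₗ
    Submodule.Quotient.equiv _ _ (e₂.ofSubmodules _ _ hker) ?_
  have hcomp (y : S.X₁) : e₂.ofSubmodules _ _ hker (S.moduleCatToCycles y) = f (e₁ y) := hf y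
  refine Submodule.ext fun x ↦ ⟨?_, ?_⟩
  · rintro ⟨_, ⟨y, rfl⟩, rfl⟩
    exact ⟨e₁ y, (hcomp y).symm⟩
  · rintro ⟨y, hy⟩
    refine ⟨_, ⟨e₁.symm y, rfl⟩, Subtype.ext ?_⟩
    exact (hcomp _).trans ((congrArg f (e₁.apply_symm_apply y)).trans hy)

variable (R : Type) [CommRing R] (X : Type) [TopologicalSpace X]

/-- Reduced and unreduced singular homology agree in positive degrees. -/
noncomputable def singularHomologyEquiv (n : ℕ) :
    SingularHomology R X (n + 1) ≃ₗ[R] ReducedHomology R (n + 2) X :=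
  have hp : (ComplexShape.down ℕ).prev (n + 1) = n + 2 := by simp
  have hn : (ComplexShape.down ℕ).next (n + 1) = n := ComplexShape.next_eq' _ (by simp)
  let S := (singularComplex R X).sc' (n + 2) (n + 1) n
  let e : SingularHomology R X (n + 1) ≅ S.homology :=
    ShortComplex.homologyMapIso ((singularComplex R X).isoSc' _ _ _ hp hn)
  e.toLinearEquiv ≪≫ₗ
    shortComplexHomologyEquiv S (singularComplexEquiv R X (n + 2))
      (singularComplexEquiv R X (n + 1)) (singularComplexEquiv R X n)
      SingularChain.boundary SingularChain.boundary
      (singularComplexEquiv_d R) (singularComplexEquiv_d R)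

end SingularHomology

theorem h_two_sp_cp_general (R : Type) [CommRing R] (d n : ℕ) (hd : 1 ≤ d) (hn : 1 ≤ n) :
    Nonempty (SingularHomology R (SP (CP n) d) 2 ≃ₗ[R] R) := by
  have : NeZero d := ⟨by lia⟩
  have : NeZero n := ⟨by lia⟩
  let univEquiv : ReducedHomology R 3 (SP (CP n) d) ≃ₗ[R]
      ReducedHomologyOn R 3 (Set.univ : Set (SP (CP n) d)) :=
    ReducedHomology.congr (Homeomorph.Set.univ _).symm.toHomotopyEquiv ≪≫ₗ ReducedHomologyOn.equiv
  let unionEquiv := LinearEquiv.ofBijective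
    (ReducedHomologyOn.incl (R := R) (n := 3)
      (Set.subset_univ (SP.evalOpen d n 0 ∪ SP.evalOpen d n 1)))
    ⟨SP.incl_evalOpen_union_injective, SP.incl_evalOpen_union_surjective⟩
  obtain ⟨circleEquiv⟩ := nonempty_linearEquiv_punctured (R := R) (E := ℂ)
  rw [Complex.finrank_real_complex] at circleEquiv
  exact ⟨singularHomologyEquiv R _ 1 ≪≫ₗ univEquiv ≪≫ₗ unionEquiv.symm ≪≫ₗ
    SP.evalOpenUnionEquiv R ≪≫ₗ circleEquiv⟩

/-- **Corollary 3.7** (case `p = 0`, second assertion): for `d ≥ 1` and `n ≥ 1`,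
`H₂(SP^d(ℂP^n); ℤ) ≅ ℤ`. -/
theorem h_two_sp_cp (d n : ℕ) (hd : 1 ≤ d) (hn : 1 ≤ n) :
    Nonempty ((SingularHomology ℤ (SP (CP n) d) 2) ≃ₗ[ℤ] ℤ) := by
  exact h_two_sp_cp_general ℤ d n hd hn
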